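/- Let ω: S² → S⁴ be the S¹-equivariant harmonic sphere ω_{μ₁,μ₂} of the explicit two-parameter family with real parameters μ₁, μ₂ ≥ 0, and suppose the tangent map ŵ(x) = ω(x/|x|) is stable. Then for every S¹-invariant function g ∈ C¹(S²; ℝ) with g(0,0,1) = g(0,0,−1) = 0 one has ∫_{S²} g(y)² |∇ŵ(y)|² dσ(y) ≤ ∫_{S²} ( ¼ g(y)² + |∇ĝ(y)|² + g(y)²/(y₁² + y₂²) ) dσ(y), where ĝ(x) = g(x/|x|) is the degree-zero homogeneous extension of g and σ is the surface measure on S². -/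

import Mathlib

noncomputable section

open MeasureTheory
open scoped Classical

abbrev E3 : Type := EuclideanSpace ℝ (Fin 3)

abbrev V5 : Type := ℝ × ℂ × ℂ

/-- Squared Euclidean norm on ℝ ⊕ ℂ ⊕ ℂ. -/
def nsq (p : V5) : ℝ := p.1 ^ 2 + Complex.normSq p.2.1 + Complex.normSq p.2.2

/-- Real inner product on ℝ ⊕ ℂ ⊕ ℂ. -/
def vdot (p q : V5) : ℝ :=
  p.1 * q.1 + (p.2.1 * (starRingEnd ℂ) q.2.1).re + (p.2.2 * (starRingEnd ℂ) q.2.2).re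

/-- The circle action R_α · (t, ζ₁, ζ₂) = (t, e^{iα}ζ₁, e^{2iα}ζ₂) on ℝ ⊕ ℂ ⊕ ℂ. -/
def circAct (α : ℝ) (p : V5) : V5 :=
  (p.1, Complex.exp (Complex.I * (α : ℂ)) * p.2.1,
    Complex.exp (2 * Complex.I * (α : ℂ)) * p.2.2)

/-- Rotation of ℝ³ by angle α about the x₃-axis. -/
def rot3 (α : ℝ) (x : E3) : E3 :=
  EuclideanSpace.single (0 : Fin 3) (Real.cos α * x 0 - Real.sin α * x 1) +
    EuclideanSpace.single (1 : Fin 3) (Real.sin α * x 0 + Real.cos α * x 1) +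
    EuclideanSpace.single (2 : Fin 3) (x 2)

/-- The unit sphere S² ⊂ ℝ³. -/
def sphere2 : Set E3 := Metric.sphere (0 : E3) 1

def northPole : E3 := EuclideanSpace.single (2 : Fin 3) (1 : ℝ)

def southPole : E3 := EuclideanSpace.single (2 : Fin 3) (-1 : ℝ)

/-- Degree-zero homogeneous extension of a map defined on the sphere. -/
def homExt (ω : E3 → V5) : E3 → V5 := fun x => ω (‖x‖⁻¹ • x)

def homExtR (g : E3 → ℝ) : E3 → ℝ := fun x => g (‖x‖⁻¹ • x)

/-- Squared Euclidean norm of the differential. -/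
def gradSq (f : E3 → V5) (x : E3) : ℝ :=
  ∑ i : Fin 3, nsq (fderiv ℝ f x (EuclideanSpace.single i (1 : ℝ)))

def gradSqR (f : E3 → ℝ) (x : E3) : ℝ :=
  ∑ i : Fin 3, fderiv ℝ f x (EuclideanSpace.single i (1 : ℝ)) ^ 2

/-- Componentwise Euclidean Laplacian. -/
def lap (f : E3 → V5) (x : E3) : V5 :=
  ∑ i : Fin 3,
    fderiv ℝ (fun y => fderiv ℝ f y (EuclideanSpace.single i (1 : ℝ))) x
      (EuclideanSpace.single i (1 : ℝ))

/-- ω : S² → S⁴ is a (smooth) harmonic sphere: it maps the sphere into the unit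
sphere of ℝ ⊕ ℂ ⊕ ℂ, its degree-zero homogeneous extension Q is smooth away from
the origin, and ΔQ + |∇Q|²Q = 0 on ℝ³ ∖ {0}. -/
def IsHarmonicSphere (ω : E3 → V5) : Prop :=
  (∀ x ∈ sphere2, nsq (ω x) = 1) ∧
    ContDiffOn ℝ (⊤ : ℕ∞) (homExt ω) {(0 : E3)}ᶜ ∧
    ∀ x : E3, x ≠ 0 → lap (homExt ω) x + gradSq (homExt ω) x • homExt ω x = 0

/-- S¹-equivariance of a sphere map. -/
def EquivariantS (ω : E3 → V5) : Prop :=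
  ∀ α : ℝ, ∀ x ∈ sphere2, ω (rot3 α x) = circAct α (ω x)

/-- S¹-equivariance of a vector field on ℝ³. -/
def EquivariantV (X : E3 → V5) : Prop :=
  ∀ (α : ℝ) (x : E3), X (rot3 α x) = circAct α (X x)

/-- Tangential part X_T = X - (w·X)w. -/
def tangPart (w X : E3 → V5) : E3 → V5 := fun x => X x - vdot (w x) (X x) • w x

/-- Second variation δ²E₀(w)[X] = ∫ (|∇X_T|² - |∇w|²|X_T|²). -/
def secondVar (w X : E3 → V5) : ℝ :=
  ∫ x : E3, (gradSq (tangPart w X) x - gradSq w x * nsq (tangPart w X x))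

/-- Stability of a tangent map within the S¹-equivariant class. -/
def IsStable (w : E3 → V5) : Prop :=
  ∀ X : E3 → V5, ContDiff ℝ (⊤ : ℕ∞) X → HasCompactSupport X → EquivariantV X →
    0 ≤ secondVar w X

def conj' (z : ℂ) : ℂ := (starRingEnd ℂ) z

/-- The twistor fibration, in homogeneous coordinates on ℂ⁴ ∖ {0}. -/
def tau4 (w0 w1 w2 w3 : ℂ) : V5 :=
  ((Complex.normSq w0 + Complex.normSq w3 - Complex.normSq w1 - Complex.normSq w2) /
      (Complex.normSq w0 + Complex.normSq w1 + Complex.normSq w2 + Complex.normSq w3),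
    2 * (conj' w0 * w1 + conj' w2 * w3) /
      ((Complex.normSq w0 + Complex.normSq w1 + Complex.normSq w2 + Complex.normSq w3 : ℝ) : ℂ),
    2 * (conj' w0 * w2 - conj' w1 * w3) /
      ((Complex.normSq w0 + Complex.normSq w1 + Complex.normSq w2 + Complex.normSq w3 : ℝ) : ℂ))

/-- Inverse stereographic projection ℂ → S² (from the south pole). -/
def stInv (z : ℂ) : E3 :=
  EuclideanSpace.single (0 : Fin 3) (2 * z.re / (1 + Complex.normSq z)) +
    EuclideanSpace.single (1 : Fin 3) (2 * z.im / (1 + Complex.normSq z)) +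
    EuclideanSpace.single (2 : Fin 3) ((1 - Complex.normSq z) / (1 + Complex.normSq z))

/-- Equatorial embedding ω_eq^{(1)}(x) = (x₃, x₁ + ix₂, 0). -/
def omegaEq1 (x : E3) : V5 := (x 2, (x 0 : ℂ) + (x 1 : ℂ) * Complex.I, 0)

/-- Equatorial embedding ω_eq^{(2)}(x) = (x₃, 0, x₁ + ix₂). -/
def omegaEq2 (x : E3) : V5 := (x 2, 0, (x 0 : ℂ) + (x 1 : ℂ) * Complex.I)

/-- The horizontal algebraic curve composed with the twistor fibration. -/
def liftCurve (μ1 μ2 z0 z1 : ℂ) : V5 :=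
  tau4 (z0 ^ 3) (μ1 * z0 ^ 2 * z1) (μ2 * z0 * z1 ^ 2) (-(μ1 * μ2 / 3) * z1 ^ 3)

/-- The explicit two-parameter family ω_{μ₁,μ₂} of equivariant harmonic spheres,
as a map defined on S² via the identification [z₀, z₁] ↦ σ₂⁻¹(z₁/z₀). -/
def omegaFam (μ1 μ2 : ℂ) (x : E3) : V5 :=
  if x = southPole then
    if μ1 = 0 ∧ μ2 = 0 then ((1 : ℝ), 0, 0)
    else if μ1 ≠ 0 ∧ μ2 ≠ 0 then liftCurve μ1 μ2 0 1
    else ((-1 : ℝ), 0, 0)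
  else liftCurve μ1 μ2 ((1 + x 2 : ℝ) : ℂ) ((x 0 : ℂ) + (x 1 : ℂ) * Complex.I)

/-- Wirtinger derivative ∂f/∂z̄ = ½(∂_{x₁} + i ∂_{x₂})f. -/
def wd (f : ℂ → ℂ) (z : ℂ) : ℂ :=
  (1 / 2 : ℂ) * (fderiv ℝ f z 1 + Complex.I * fderiv ℝ f z Complex.I)

/-- Surface (2-dimensional Hausdorff) measure on ℝ³. -/
def surf : Measure E3 := Measure.hausdorffMeasure 2

/-!
Test the second variation on `X = η(r) k(cos θ) · (0, i e^{iφ}, 0)`. The first complex component of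
`ω_{μ₁,μ₂}` with real parameters is a real multiple of `x₁ + i x₂`, so `X` is equivariant and
everywhere orthogonal to `ŵ`. Polar coordinates split `δ²E₀` into radial and angular integrals.
Choosing `η` nearly optimal in the radial Hardy inequality replaces the radial energy by its sharp
constant `1/4`, which is the term `¼ g²`; the term `g² / (y₁² + y₂²)` is the energy of the turning
direction `i e^{iφ}`. The profile `k` must vanish near the poles and be smooth; truncating the
values of `g` and mollifying in `cos θ` reduces to this case, with Fatou's lemma on the left.

The inequality is homogeneous in the measure, so Hausdorff measure on the sphere may be replaced by
the polar-coordinate measure: both give balls of equal radius equal mass, hence are proportional.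
-/

section UniformlyDistributed

open Set Filter Topology Metric

variable {X : Type*} [PseudoMetricSpace X] [MeasurableSpace X]

/-- A uniformly distributed measure: the mass of a ball depends on its radius only. -/
def IsUniformlyDistributed (μ : Measure X) : Prop :=
  ∀ (x y : X) (r : ℝ), μ (ball x r) = μ (ball y r)

namespace IsUniformlyDistributed

variable [SecondCountableTopology X] {μ ν : Measure X}

lemma measure_eq_zero (hν : IsUniformlyDistributed ν) {x : X} {r : ℝ} (hr : 0 < r)
    (hx : ν (ball x r) = 0) : ν = 0 := by
  rw [← Measure.measure_univ_eq_zero]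
  exact measure_null_of_locally_null _ fun y _ =>
    ⟨ball y r, mem_nhdsWithin_of_mem_nhds (ball_mem_nhds y hr), (hν y x r).trans hx⟩

variable [BorelSpace X] [IsFiniteMeasure μ] [IsFiniteMeasure ν]

lemma measure_mul_ball_le (hμ : IsUniformlyDistributed μ) (hν : IsUniformlyDistributed ν)
    (x : X) (r : ℝ) {F : Set X} (hF : MeasurableSet F) :
    μ F * ν (ball x r) ≤ μ (ball x r) * ν (thickening r F) := by
  have hS : MeasurableSet {p : X × X | dist p.1 p.2 < r} :=
    (isOpen_lt continuous_dist continuous_const).measurableSet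
  have hF' : MeasurableSet (thickening r F) := isOpen_thickening.measurableSet
  calc μ F * ν (ball x r) = ∫⁻ y in F, ν (ball y r) ∂μ := by
        simp only [hν _ x, setLIntegral_const, mul_comm]
    _ = (μ.prod ν) ({p | dist p.1 p.2 < r} ∩ F ×ˢ univ) := by
        rw [Measure.prod_apply (hS.inter (hF.prod .univ)), ← lintegral_indicator hF]
        refine lintegral_congr fun y => ?_
        by_cases hy : y ∈ F <;> simp [hy, ball, dist_comm y]
    _ ≤ (μ.prod ν) ({p | dist p.1 p.2 < r} ∩ univ ×ˢ thickening r F) :=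
        measure_mono fun p hp =>
          ⟨hp.1, mem_univ _, mem_thickening_iff.2 ⟨p.1, hp.2.1, (dist_comm _ _).trans_lt hp.1⟩⟩
    _ = ∫⁻ y in thickening r F, μ (ball y r) ∂ν := by
        rw [Measure.prod_apply_symm (hS.inter (MeasurableSet.univ.prod hF')),
          ← lintegral_indicator hF']
        refine lintegral_congr fun y => ?_
        by_cases hy : y ∈ thickening r F <;> simp [hy, ball]
    _ = μ (ball x r) * ν (thickening r F) := by simp only [hμ _ x, setLIntegral_const]

lemma measure_univ_mul_ball (hμ : IsUniformlyDistributed μ) (hν : IsUniformlyDistributed ν)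
    {x : X} {r : ℝ} (hr : 0 < r) : μ univ * ν (ball x r) = μ (ball x r) * ν univ := by
  have huniv : thickening r (univ : Set X) = univ :=
    univ_subset_iff.1 (self_subset_thickening hr univ)
  apply le_antisymm
  · simpa only [huniv] using hμ.measure_mul_ball_le hν x r .univ
  · simpa only [huniv, mul_comm] using hν.measure_mul_ball_le hμ x r .univ

lemma measure_mul_univ_le (hμ : IsUniformlyDistributed μ) (hν : IsUniformlyDistributed ν)
    {F : Set X} (hF : IsClosed F) : μ F * ν univ ≤ μ univ * ν F := by
  rcases isEmpty_or_nonempty X with hX | ⟨⟨x⟩⟩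
  · simp [Subsingleton.elim F ∅]
  rcases eq_or_ne ν 0 with rfl | hν0
  · simp
  have hthick (r : ℝ) (hr : 0 < r) : μ F * ν univ ≤ μ univ * ν (thickening r F) := by
    have hball : ν (ball x r) ≠ 0 := fun h => hν0 (hν.measure_eq_zero hr h)
    refine (ENNReal.mul_le_mul_iff_right hball (measure_ne_top ν _)).1 ?_
    calc ν (ball x r) * (μ F * ν univ) = μ F * ν (ball x r) * ν univ := by ring
      _ ≤ μ (ball x r) * ν (thickening r F) * ν univ := by
          gcongr ?_ * _
          exact hμ.measure_mul_ball_le hν x r hF.measurableSet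
      _ = μ (ball x r) * ν univ * ν (thickening r F) := by ring
      _ = ν (ball x r) * (μ univ * ν (thickening r F)) := by
          rw [← hμ.measure_univ_mul_ball hν hr]; ring
  have hlim : Tendsto (fun r => μ univ * ν (thickening r F)) (𝓝[>] 0) (𝓝 (μ univ * ν F)) :=
    ENNReal.Tendsto.const_mul
      (tendsto_measure_thickening_of_isClosed ⟨1, one_pos, measure_ne_top ν _⟩ hF)
      (.inr (measure_ne_top μ _))
  exact ge_of_tendsto hlim (eventually_mem_nhdsWithin.mono hthick)

theorem univ_smul_eq (hμ : IsUniformlyDistributed μ) (hν : IsUniformlyDistributed ν) :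
    ν univ • μ = μ univ • ν := by
  have := Measure.smul_finite μ (measure_ne_top ν univ)
  refine ext_of_generate_finite _ (BorelSpace.measurable_eq.trans borel_eq_generateFrom_isClosed)
    isPiSystem_isClosed (fun F hF => ?_) (by simp [mul_comm])
  simp only [Measure.smul_apply, smul_eq_mul]
  apply le_antisymm
  · simpa only [mul_comm] using hμ.measure_mul_univ_le hν hF
  · simpa only [mul_comm] using hν.measure_mul_univ_le hμ hF

end IsUniformlyDistributed

end UniformlyDistributed

section SphereMeasure

open Set Metric Module
open scoped Pointwise

variable {E : Type*} [NormedAddCommGroup E] [InnerProductSpace ℝ E]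

lemma exists_linearIsometryEquiv_image_ball (x y : sphere (0 : E) 1) (r : ℝ) :
    ∃ L : E ≃ₗᵢ[ℝ] E, L '' (Subtype.val '' ball x r) = Subtype.val '' ball y r := by
  have hxy : ‖(x : E)‖ = ‖(y : E)‖ := by simp
  have hball (z : sphere (0 : E) 1) : Subtype.val '' ball z r = ball (z : E) r ∩ sphere 0 1 := by
    rw [← Subtype.preimage_ball, Subtype.image_preimage_coe, inter_comm]
  obtain ⟨L, hL⟩ : ∃ L : E ≃ₗᵢ[ℝ] E, L x = y := ⟨_, Submodule.reflection_sub hxy⟩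
  refine ⟨L, ?_⟩
  rw [hball, hball, image_inter L.injective, L.image_ball, L.image_sphere, hL, map_zero]

variable [MeasurableSpace E] [BorelSpace E]

lemma isUniformlyDistributed_hausdorffMeasure_sphere {d : ℝ} (hd : 0 ≤ d) :
    IsUniformlyDistributed (Measure.hausdorffMeasure d : Measure (sphere (0 : E) 1)) := by
  intro x y r
  obtain ⟨L, hL⟩ := exists_linearIsometryEquiv_image_ball x y r
  have hcoe (s : Set (sphere (0 : E) 1)) :
      Measure.hausdorffMeasure d (Subtype.val '' s) = Measure.hausdorffMeasure d s :=
    isometry_subtype_coe.hausdorffMeasure_image (.inl hd) s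
  rw [← hcoe, ← hcoe, ← hL]
  exact (L.toIsometryEquiv.hausdorffMeasure_image d _).symm

lemma isUniformlyDistributed_toSphere [FiniteDimensional ℝ E] :
    IsUniformlyDistributed (volume : Measure E).toSphere := by
  intro x y r
  obtain ⟨L, hL⟩ := exists_linearIsometryEquiv_image_ball x y r
  have hsmul : Ioo (0 : ℝ) 1 • (L '' (Subtype.val '' ball x r)) =
      L '' (Ioo (0 : ℝ) 1 • (Subtype.val '' ball x r)) := by
    simp only [← image2_smul, image_image2, image2_image_right, map_smul]
  rw [Measure.toSphere_apply' _ isOpen_ball.measurableSet,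
    Measure.toSphere_apply' _ isOpen_ball.measurableSet, ← hL, hsmul,
    L.image_eq_preimage_symm,
    L.symm.measurePreserving.measure_preimage_emb L.symm.toHomeomorph.measurableEmbedding]

theorem exists_setIntegral_hausdorffMeasure_sphere [FiniteDimensional ℝ E] [Nontrivial E]
    {d : ℝ} (hd : 0 ≤ d) (hfin : Measure.hausdorffMeasure d (sphere (0 : E) 1) ≠ ⊤) :
    ∃ c : ℝ, 0 ≤ c ∧ ∀ F : E → ℝ, ∫ y in sphere (0 : E) 1, F y ∂Measure.hausdorffMeasure d =
      c * ∫ y : sphere (0 : E) 1, F y ∂(volume : Measure E).toSphere := by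
  set σ := (volume : Measure E).toSphere
  set τ : Measure (sphere (0 : E) 1) := Measure.hausdorffMeasure d
  have hmap : τ.map Subtype.val = (Measure.hausdorffMeasure d).restrict (sphere (0 : E) 1) := by
    rw [isometry_subtype_coe.map_hausdorffMeasure (.inl hd), Subtype.range_coe]
  have : IsFiniteMeasure τ := ⟨by
    rwa [← isometry_subtype_coe.hausdorffMeasure_image (.inl hd), image_univ, Subtype.range_coe,
      lt_top_iff_ne_top]⟩
  have hσ : σ.real univ ≠ 0 :=
    have : NeZero σ := ⟨Measure.toSphere_ne_zero _⟩
    measureReal_univ_ne_zero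
  have hprop : σ univ • τ = τ univ • σ :=
    (isUniformlyDistributed_hausdorffMeasure_sphere hd).univ_smul_eq isUniformlyDistributed_toSphere
  refine ⟨τ.real univ / σ.real univ, by positivity, fun F => ?_⟩
  have hF := congrArg (fun m => ∫ y : sphere (0 : E) 1, F y ∂m) hprop
  simp only [integral_smul_measure, smul_eq_mul] at hF
  rw [← hmap, (MeasurableEmbedding.subtype_coe isClosed_sphere.measurableSet).integral_map,
    div_mul_eq_mul_div, eq_div_iff hσ, mul_comm]
  exact hF

end SphereMeasure

lemma contDiff_of_tsupport {E F : Type*} [NormedAddCommGroup E] [NormedSpace ℝ E]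
    [NormedAddCommGroup F] [NormedSpace ℝ F] {n : WithTop ℕ∞} {f : E → F}
    (hf : ∀ x ∈ tsupport f, ContDiffAt ℝ n f x) : ContDiff ℝ n f :=
  contMDiff_iff_contDiff.1 (contMDiff_of_tsupport fun x hx => (hf x hx).contMDiffAt)

section EmdenFowler

open Set Filter Topology Real
open scoped ContDiff

/-- The Emden–Fowler transform `r ↦ r⁻ᵇ ψ(log r)` on the positive half-line, extended by zero.
It turns the Hardy quotient on the half-line into a translation-invariant one. -/
def emdenFowler (b : ℝ) (ψ : ℝ → ℝ) : ℝ → ℝ :=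
  (Ioi 0).indicator fun r => r ^ (-b) * ψ (log r)

variable {b : ℝ} {ψ : ℝ → ℝ}

lemma emdenFowler_of_pos {r : ℝ} (hr : 0 < r) : emdenFowler b ψ r = r ^ (-b) * ψ (log r) :=
  indicator_of_mem hr _

lemma deriv_emdenFowler (hψ : Differentiable ℝ ψ) {r : ℝ} (hr : 0 < r) :
    deriv (emdenFowler b ψ) r = emdenFowler (b + 1) (fun t => deriv ψ t - b * ψ t) r := by
  have hderiv : HasDerivAt (fun r => r ^ (-b) * ψ (log r))
      (-b * r ^ (-b - 1) * ψ (log r) + r ^ (-b) * (deriv ψ (log r) * r⁻¹)) r :=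
    (hasDerivAt_rpow_const (p := -b) (.inl hr.ne')).fun_mul
      ((hψ (log r)).hasDerivAt.comp r (hasDerivAt_log hr.ne'))
  have heq : emdenFowler b ψ =ᶠ[𝓝 r] fun r => r ^ (-b) * ψ (log r) :=
    (eventually_gt_nhds hr).mono fun _ => emdenFowler_of_pos
  rw [heq.deriv_eq, hderiv.deriv, emdenFowler_of_pos hr, show -(b + 1) = -b - 1 by ring,
    rpow_sub_one hr.ne']
  ring

lemma integral_sq_emdenFowler :
    ∫ r in Ioi (0 : ℝ), r ^ (2 * b - 1) * emdenFowler b ψ r ^ 2 = ∫ t, ψ t ^ 2 := by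
  rw [← range_exp, ← image_univ, integral_image_eq_integral_abs_deriv_smul .univ
    (fun t _ => (hasDerivAt_exp t).hasDerivWithinAt) exp_injective.injOn, setIntegral_univ]
  refine integral_congr_ae (.of_forall fun t => ?_)
  have hexp : exp t * (exp (t * (2 * b - 1)) * exp (t * -b) ^ 2) = 1 := by
    rw [← exp_nat_mul, ← exp_add, ← exp_add, exp_eq_one_iff]
    push_cast
    ring
  simp only [emdenFowler_of_pos (exp_pos t), log_exp, ← exp_mul, abs_exp, smul_eq_mul]
  linear_combination ψ t ^ 2 * hexp

lemma tsupport_emdenFowler_subset (hψ : HasCompactSupport ψ) :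
    tsupport (emdenFowler b ψ) ⊆ exp '' tsupport ψ := by
  refine closure_minimal (fun r hr => ?_) (hψ.isCompact.image continuous_exp).isClosed
  have hr0 : 0 < r := mem_of_indicator_ne_zero hr
  rw [Function.mem_support, emdenFowler_of_pos hr0] at hr
  exact ⟨log r, subset_tsupport _ (right_ne_zero_of_mul hr), exp_log hr0⟩

lemma hasCompactSupport_emdenFowler (hψ : HasCompactSupport ψ) :
    HasCompactSupport (emdenFowler b ψ) :=
  (hψ.isCompact.image continuous_exp).of_isClosed_subset (isClosed_tsupport _)
    (tsupport_emdenFowler_subset hψ)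

lemma tsupport_emdenFowler_subset_Ioi (hψ : HasCompactSupport ψ) :
    tsupport (emdenFowler b ψ) ⊆ Ioi 0 :=
  (tsupport_emdenFowler_subset hψ).trans (image_subset_iff.2 fun t _ => exp_pos t)

lemma contDiff_emdenFowler (hψ : HasCompactSupport ψ) (hψ' : ContDiff ℝ ∞ ψ) :
    ContDiff ℝ ∞ (emdenFowler b ψ) := by
  refine contDiff_of_tsupport fun r hr => ?_
  have hr0 : 0 < r := tsupport_emdenFowler_subset_Ioi hψ hr
  refine ContDiffAt.congr_of_eventuallyEq ?_
    ((eventually_gt_nhds hr0).mono fun _ => emdenFowler_of_pos)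
  exact (contDiffAt_rpow_const_of_ne hr0.ne').mul (hψ'.contDiffAt.comp r (contDiffAt_log.2 hr0.ne'))

lemma integral_sq_deriv_sub_mul (hψ : HasCompactSupport ψ) (hψ' : ContDiff ℝ 1 ψ) :
    ∫ t, (deriv ψ t - b * ψ t) ^ 2 = (∫ t, deriv ψ t ^ 2) + b ^ 2 * ∫ t, ψ t ^ 2 := by
  have hd : Continuous (deriv ψ) := hψ'.continuous_deriv le_rfl
  have hi1 : Integrable (fun t => deriv ψ t ^ 2) :=
    (hd.memLp_of_hasCompactSupport hψ.deriv).integrable_sq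
  have hi2 : Integrable (fun t => ψ t ^ 2) :=
    (hψ'.continuous.memLp_of_hasCompactSupport hψ).integrable_sq
  have hi3 : Integrable (fun t => ψ t * deriv ψ t) :=
    (hψ'.continuous.mul hd).integrable_of_hasCompactSupport hψ.mul_right
  have hi4 : Integrable (fun t => b * (2 * (ψ t * deriv ψ t))) := (hi3.const_mul 2).const_mul b
  have hcross : ∫ t, 2 * (ψ t * deriv ψ t) = 0 :=
    integral_eq_zero_of_hasDerivAt_of_integrable (f := fun t => ψ t ^ 2)
      (fun t => ((hψ'.differentiable one_ne_zero t).hasDerivAt.fun_pow 2).congr_deriv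
        (by simp only [Nat.cast_ofNat, Nat.add_one_sub_one, pow_one]; ring))
      (hi3.const_mul 2) hi2
  calc ∫ t, (deriv ψ t - b * ψ t) ^ 2
      = ∫ t, (deriv ψ t ^ 2 - b * (2 * (ψ t * deriv ψ t)) + b ^ 2 * ψ t ^ 2) :=
        integral_congr_ae (.of_forall fun t => by ring)
    _ = (∫ t, deriv ψ t ^ 2) + b ^ 2 * ∫ t, ψ t ^ 2 := by
        rw [integral_add (by exact hi1.sub hi4) (hi2.const_mul _), integral_sub hi1 hi4,
          integral_const_mul b, hcross, integral_const_mul, mul_zero, sub_zero]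

/-- Dilating a bump multiplies the quotient `∫ψ'² / ∫ψ²` by the inverse square of the dilation. -/
lemma exists_integral_sq_deriv_le {ε : ℝ} (hε : 0 < ε) : ∃ ψ : ℝ → ℝ, ContDiff ℝ ∞ ψ ∧
    HasCompactSupport ψ ∧ 0 < ∫ t, ψ t ^ 2 ∧ ∫ t, deriv ψ t ^ 2 ≤ ε * ∫ t, ψ t ^ 2 := by
  obtain ⟨φ⟩ : Nonempty (ContDiffBump (0 : ℝ)) := ⟨⟨1, 2, one_pos, one_lt_two⟩⟩
  set A := ∫ t, deriv φ t ^ 2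
  set B := ∫ t, φ t ^ 2
  have : 0 ≤ A := integral_nonneg fun t => sq_nonneg _
  have hB : 0 < B := (φ.continuous.pow 2).integral_pos_of_hasCompactSupport_nonneg_nonzero
    (φ.hasCompactSupport.comp_left (g := fun x => x ^ 2) (by simp)) (fun t => sq_nonneg _) (x := 0)
    (by simp [φ.one_of_mem_closedBall (Metric.mem_closedBall_self φ.rIn_pos.le)])
  obtain ⟨s, hs, hsA⟩ : ∃ s > 0, s ^ 2 * A ≤ ε * B := by
    refine ⟨√(ε * B / (A + 1)), by positivity, ?_⟩
    rw [sq_sqrt (by positivity), div_mul_eq_mul_div, div_le_iff₀ (by positivity)]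
    nlinarith [mul_pos hε hB]
  refine ⟨fun t => φ (s * t), φ.contDiff.comp (contDiff_const.mul contDiff_id),
    φ.hasCompactSupport.comp_homeomorph (Homeomorph.mulLeft₀ s hs.ne'), ?_, ?_⟩
  · rw [Measure.integral_comp_mul_left (fun t => φ t ^ 2)]
    positivity
  · simp only [deriv_comp_mul_left, smul_eq_mul, mul_pow]
    rw [integral_const_mul, Measure.integral_comp_mul_left (fun t => deriv φ t ^ 2),
      Measure.integral_comp_mul_left (fun t => φ t ^ 2)]
    simp only [smul_eq_mul]
    calc s ^ 2 * (|s⁻¹| * A) = |s⁻¹| * (s ^ 2 * A) := by ring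
      _ ≤ |s⁻¹| * (ε * B) := by gcongr
      _ = ε * (|s⁻¹| * B) := by ring

theorem hardy_sharp (b : ℝ) {ε : ℝ} (hε : 0 < ε) : ∃ η : ℝ → ℝ, ContDiff ℝ ∞ η ∧
    HasCompactSupport η ∧ tsupport η ⊆ Ioi 0 ∧
    0 < ∫ r in Ioi (0 : ℝ), r ^ (2 * b - 1) * η r ^ 2 ∧
    ∫ r in Ioi (0 : ℝ), r ^ (2 * b + 1) * deriv η r ^ 2 ≤
      (b ^ 2 + ε) * ∫ r in Ioi (0 : ℝ), r ^ (2 * b - 1) * η r ^ 2 := by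
  obtain ⟨ψ, hψ, hψc, hpos, hle⟩ := exists_integral_sq_deriv_le hε
  have hψ1 : ContDiff ℝ 1 ψ := hψ.of_le (by simp)
  refine ⟨emdenFowler b ψ, contDiff_emdenFowler hψc hψ, hasCompactSupport_emdenFowler hψc,
    tsupport_emdenFowler_subset_Ioi hψc, by rwa [integral_sq_emdenFowler], ?_⟩
  calc ∫ r in Ioi (0 : ℝ), r ^ (2 * b + 1) * deriv (emdenFowler b ψ) r ^ 2
      = ∫ r in Ioi (0 : ℝ), r ^ (2 * (b + 1) - 1) *
          emdenFowler (b + 1) (fun t => deriv ψ t - b * ψ t) r ^ 2 :=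
        setIntegral_congr_fun measurableSet_Ioi fun r hr => by
          rw [deriv_emdenFowler (hψ1.differentiable one_ne_zero) hr]
          ring_nf
    _ = (∫ t, deriv ψ t ^ 2) + b ^ 2 * ∫ t, ψ t ^ 2 := by
        rw [integral_sq_emdenFowler, integral_sq_deriv_sub_mul hψc hψ1]
    _ ≤ (b ^ 2 + ε) * ∫ r in Ioi (0 : ℝ), r ^ (2 * b - 1) * emdenFowler b ψ r ^ 2 := by
        rw [integral_sq_emdenFowler]
        linarith

end EmdenFowler

section PolarCoordinates

open Set Metric Module

variable {E : Type*} [NormedAddCommGroup E] [NormedSpace ℝ E] [FiniteDimensional ℝ E]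
  [MeasurableSpace E] [BorelSpace E]

lemma integral_volumeIoiPow (n : ℕ) (a : ℝ → ℝ) :
    ∫ r : Ioi (0 : ℝ), a r ∂Measure.volumeIoiPow n = ∫ r in Ioi (0 : ℝ), r ^ n * a r := by
  simp only [Measure.volumeIoiPow, ENNReal.ofReal]
  rw [integral_withDensity_eq_integral_smul (by fun_prop),
    integral_subtype_comap measurableSet_Ioi fun r => (r ^ n).toNNReal • a r]
  refine setIntegral_congr_fun measurableSet_Ioi fun r hr => ?_
  rw [NNReal.smul_def, Real.coe_toNNReal _ (pow_nonneg hr.out.le n), smul_eq_mul]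

lemma integrable_volumeIoiPow {n : ℕ} {a : ℝ → ℝ}
    (ha : IntegrableOn (fun r => r ^ n * a r) (Ioi 0)) :
    Integrable (fun r : Ioi (0 : ℝ) => a r) (Measure.volumeIoiPow n) := by
  rw [integrableOn_iff_comap_subtypeVal measurableSet_Ioi] at ha
  rw [Measure.volumeIoiPow, integrable_withDensity_iff_integrable_smul' (by fun_prop) (by simp)]
  refine ha.congr (.of_forall fun r => ?_)
  simp [ENNReal.toReal_ofReal (pow_nonneg r.2.out.le n)]

variable [Nontrivial E] (μ : Measure E) [μ.IsAddHaarMeasure]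

theorem integral_radial_mul_angular (a : ℝ → ℝ) (p : E → ℝ) :
    ∫ x, a ‖x‖ * p (‖x‖⁻¹ • x) ∂μ =
      (∫ r in Ioi (0 : ℝ), r ^ (finrank ℝ E - 1) * a r) *
        ∫ y : sphere (0 : E) 1, p y ∂μ.toSphere := by
  calc ∫ x, a ‖x‖ * p (‖x‖⁻¹ • x) ∂μ
      = ∫ x : ({0}ᶜ : Set E), a ‖x.1‖ * p (‖x.1‖⁻¹ • x.1) ∂μ.comap (↑) := by
        rw [integral_subtype_comap (measurableSet_singleton _).compl
          fun x => a ‖x‖ * p (‖x‖⁻¹ • x), restrict_compl_singleton]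
    _ = ∫ z : sphere (0 : E) 1 × Ioi (0 : ℝ), p z.1 * a z.2
          ∂μ.toSphere.prod (.volumeIoiPow (finrank ℝ E - 1)) := by
        rw [← μ.measurePreserving_homeomorphUnitSphereProd.integral_comp
          (Homeomorph.measurableEmbedding _)]
        simp [mul_comm]
    _ = _ := by
        rw [integral_prod_mul (fun y : sphere (0 : E) 1 => p y) (fun r : Ioi (0 : ℝ) => a r),
          integral_volumeIoiPow, mul_comm]

theorem integrable_radial_mul_angular {a : ℝ → ℝ} {p : E → ℝ}
    (ha : IntegrableOn (fun r => r ^ (finrank ℝ E - 1) * a r) (Ioi 0))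
    (hp : Integrable (fun y : sphere (0 : E) 1 => p y) μ.toSphere) :
    Integrable (fun x => a ‖x‖ * p (‖x‖⁻¹ • x)) μ := by
  rw [← restrict_compl_singleton (μ := μ) 0, ← IntegrableOn,
    integrableOn_iff_comap_subtypeVal (measurableSet_singleton _).compl]
  have h := (μ.measurePreserving_homeomorphUnitSphereProd.integrable_comp_emb
    (Homeomorph.measurableEmbedding _)).2 (hp.mul_prod (integrable_volumeIoiPow ha))
  refine h.congr (.of_forall fun x => ?_)
  simp [mul_comm]

end PolarCoordinates

section RadialProjection

open scoped InnerProductSpace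

variable {E F : Type*} [NormedAddCommGroup E] [InnerProductSpace ℝ E]
  [NormedAddCommGroup F] [NormedSpace ℝ F]

lemma hasFDerivAt_norm {x : E} (hx : x ≠ 0) :
    HasFDerivAt (fun x : E => ‖x‖) (‖x‖⁻¹ • innerSL ℝ x) x := by
  have h := (hasStrictFDerivAt_norm_sq x).hasFDerivAt.sqrt (by simpa using hx)
  simp only [Real.sqrt_sq (norm_nonneg _)] at h
  refine h.congr_fderiv ?_
  ext v
  simp
  ring

lemma hasFDerivAt_inv_norm_smul {x : E} (hx : x ≠ 0) :
    HasFDerivAt (fun x : E => ‖x‖⁻¹ • x) (‖x‖⁻¹ • (ContinuousLinearMap.id ℝ E -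
      (innerSL ℝ (‖x‖⁻¹ • x)).smulRight (‖x‖⁻¹ • x))) x := by
  have hn : ‖x‖ ≠ 0 := norm_ne_zero_iff.2 hx
  refine (((hasDerivAt_inv hn).comp_hasFDerivAt x (hasFDerivAt_norm hx)).smul
    (hasFDerivAt_id x)).congr_fderiv ?_
  ext v
  simp only [add_apply, smul_apply,
    ContinuousLinearMap.smulRight_apply, sub_apply, innerSL_apply_apply,
    ContinuousLinearMap.id_apply, inner_smul_left, smul_eq_mul, id, Function.comp_apply,
    conj_trivial]
  module

lemma contDiffAt_inv_norm_smul {n : WithTop ℕ∞} {x : E} (hx : x ≠ 0) :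
    ContDiffAt ℝ n (fun x : E => ‖x‖⁻¹ • x) x :=
  ((contDiffAt_norm ℝ hx).inv (norm_ne_zero_iff.2 hx)).smul contDiffAt_id

lemma inv_norm_smul_smul (x : E) {t : ℝ} (ht : 0 < t) : ‖t • x‖⁻¹ • t • x = ‖x‖⁻¹ • x :=
  NormedSpace.normalize_smul_of_pos ht x

lemma fderiv_smul_of_homogeneous {f : E → F} (hf : ∀ t : ℝ, 0 < t → ∀ x, f (t • x) = f x)
    {t : ℝ} (ht : 0 < t) (x : E) : fderiv ℝ f (t • x) = t⁻¹ • fderiv ℝ f x := by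
  rw [eq_inv_smul_iff₀ ht.ne', ← fderiv_comp_smul]
  simp only [hf t ht]

end RadialProjection

section Energy

lemma sum_gradient_coord {F : Type*} [NormedAddCommGroup F] [NormedSpace ℝ F] (L : E3 →L[ℝ] F)
    (x : E3) : ∑ i, x i • L (EuclideanSpace.single i 1) = L x := by
  conv_rhs => rw [← (EuclideanSpace.basisFun (Fin 3) ℝ).sum_repr x]
  simp

lemma nsq_smul (c : ℝ) (p : V5) : nsq (c • p) = c ^ 2 * nsq p := by
  simp only [nsq, Prod.smul_fst, Prod.smul_snd, Complex.normSq_apply, Complex.smul_re,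
    Complex.smul_im, smul_eq_mul]
  ring

lemma gradSq_smul_of_homogeneous {f : E3 → V5} (hf : ∀ t : ℝ, 0 < t → ∀ x, f (t • x) = f x)
    {t : ℝ} (ht : 0 < t) (x : E3) : gradSq f (t • x) = (t ^ 2)⁻¹ * gradSq f x := by
  simp only [gradSq, fderiv_smul_of_homogeneous hf ht, smul_apply, nsq_smul,
    Finset.mul_sum, inv_pow]

lemma gradSqR_smul_of_homogeneous {f : E3 → ℝ} (hf : ∀ t : ℝ, 0 < t → ∀ x, f (t • x) = f x)
    {t : ℝ} (ht : 0 < t) (x : E3) : gradSqR f (t • x) = (t ^ 2)⁻¹ * gradSqR f x := by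
  simp only [gradSqR, fderiv_smul_of_homogeneous hf ht, smul_apply,
    Finset.mul_sum, smul_eq_mul, mul_pow, inv_pow]

lemma homExt_smul (ω : E3 → V5) (t : ℝ) (ht : 0 < t) (x : E3) : homExt ω (t • x) = homExt ω x :=
  congrArg ω (inv_norm_smul_smul x ht)

lemma homExtR_smul (g : E3 → ℝ) (t : ℝ) (ht : 0 < t) (x : E3) :
    homExtR g (t • x) = homExtR g x :=
  congrArg g (inv_norm_smul_smul x ht)

lemma gradSqR_radial_mul {η : ℝ → ℝ} {v : E3 → ℝ} {x : E3} (hx : x ≠ 0)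
    (hη : DifferentiableAt ℝ η ‖x‖) (hv : DifferentiableAt ℝ v x)
    (hhom : ∀ t : ℝ, 0 < t → ∀ x, v (t • x) = v x) :
    gradSqR (fun x => η ‖x‖ * v x) x =
      deriv η ‖x‖ ^ 2 * v x ^ 2 + η ‖x‖ ^ 2 * gradSqR v x := by
  have hn : ‖x‖ ≠ 0 := norm_ne_zero_iff.2 hx
  have heuler : ∑ i, x i * fderiv ℝ v x (EuclideanSpace.single i 1) = 0 := by
    have hv0 : HasDerivAt (fun t : ℝ => v (t • x)) (fderiv ℝ v x x) 1 := by
      have h := HasFDerivAt.comp_hasDerivAt (1 : ℝ) (f := fun t : ℝ => t • x)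
        (by simpa only [one_smul] using hv.hasFDerivAt) ((hasDerivAt_id (1 : ℝ)).smul_const x)
      simpa only [Function.comp_def, one_smul] using h
    have hconst : (fun t : ℝ => v (t • x)) =ᶠ[nhds 1] fun _ => v x :=
      (eventually_gt_nhds one_pos).mono fun t ht => hhom t ht x
    simpa only [smul_eq_mul] using (sum_gradient_coord (fderiv ℝ v x) x).trans
      (hv0.unique ((hasDerivAt_const 1 (v x)).congr_of_eventuallyEq hconst))
  have hnorm : ∑ i, x i ^ 2 = ‖x‖ ^ 2 := (EuclideanSpace.real_norm_sq_eq x).symm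
  have hder (i : Fin 3) : fderiv ℝ (fun x => η ‖x‖ * v x) x (EuclideanSpace.single i 1) =
      deriv η ‖x‖ * ‖x‖⁻¹ * v x * x i +
        η ‖x‖ * fderiv ℝ v x (EuclideanSpace.single i 1) := by
    have hprod : HasFDerivAt (fun x => η ‖x‖ * v x) _ x :=
      (hη.hasDerivAt.comp_hasFDerivAt x (hasFDerivAt_norm hx)).mul hv.hasFDerivAt
    rw [hprod.fderiv]
    simp [EuclideanSpace.inner_single_right]
    ring
  simp only [gradSqR, hder, Fin.sum_univ_three] at heuler hnorm ⊢
  field_simp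
  linear_combination deriv η ‖x‖ ^ 2 * v x ^ 2 * hnorm +
    2 * deriv η ‖x‖ * v x * η ‖x‖ * ‖x‖ * heuler

lemma gradSqR_homExtR_zonal {k : ℝ → ℝ} {y : E3} (hy : ‖y‖ = 1) (hk : DifferentiableAt ℝ k (y 2)) :
    gradSqR (homExtR fun x => k (x 2)) y = (1 - y 2 ^ 2) * deriv k (y 2) ^ 2 := by
  have hy0 : y ≠ 0 := norm_ne_zero_iff.1 (by simp [hy])
  have hcoord : HasFDerivAt (fun x : E3 => (‖x‖⁻¹ • x) 2) _ y :=
    (EuclideanSpace.proj (𝕜 := ℝ) (2 : Fin 3)).hasFDerivAt.comp y (hasFDerivAt_inv_norm_smul hy0)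
  have hfd : HasFDerivAt (homExtR fun x => k (x 2)) _ y :=
    HasDerivAt.comp_hasFDerivAt (h₂ := k) (h₂' := deriv k (y 2)) y
      (by simpa [hy] using hk.hasDerivAt) hcoord
  have hder (i : Fin 3) : fderiv ℝ (homExtR fun x => k (x 2)) y (EuclideanSpace.single i 1) =
      deriv k (y 2) * ((if i = 2 then 1 else 0) - y i * y 2) := by
    rw [hfd.fderiv]
    simp [hy, EuclideanSpace.inner_single_right, eq_comm]
  have hnorm : ∑ i, y i ^ 2 = 1 := by rw [← EuclideanSpace.real_norm_sq_eq, hy, one_pow]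
  rw [Fin.sum_univ_three] at hnorm
  simp only [gradSqR, hder, Fin.sum_univ_three, Fin.reduceEq, if_true, if_false]
  linear_combination deriv k (y 2) ^ 2 * y 2 ^ 2 * hnorm

end Energy

section AzimuthalField

open scoped InnerProductSpace

/-- The projection of `ℝ³` onto the horizontal plane, identified with `ℂ`. -/
def planar : E3 →L[ℝ] ℂ :=
  (EuclideanSpace.proj (0 : Fin 3)).smulRight 1 +
    (EuclideanSpace.proj (1 : Fin 3)).smulRight Complex.I

@[simp]
lemma planar_re (x : E3) : (planar x).re = x 0 := by simp [planar]

@[simp]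
lemma planar_im (x : E3) : (planar x).im = x 1 := by simp [planar]

lemma normSq_planar (x : E3) : Complex.normSq (planar x) = x 0 ^ 2 + x 1 ^ 2 := by
  rw [Complex.normSq_apply, planar_re, planar_im, sq, sq]

lemma planar_rot3 (α : ℝ) (x : E3) :
    planar (rot3 α x) = Complex.exp (Complex.I * α) * planar x := by
  rw [mul_comm Complex.I, Complex.exp_mul_I]
  apply Complex.ext <;> simp [rot3, Complex.cos_ofReal_re, Complex.sin_ofReal_re,
    Complex.cos_ofReal_im, Complex.sin_ofReal_im]
  ring

lemma norm_rot3 (α : ℝ) (x : E3) : ‖rot3 α x‖ = ‖x‖ := by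
  rw [← sq_eq_sq₀ (norm_nonneg _) (norm_nonneg _), EuclideanSpace.real_norm_sq_eq,
    EuclideanSpace.real_norm_sq_eq]
  simp only [rot3, Fin.sum_univ_three, PiLp.add_apply, PiLp.single_apply, Fin.reduceEq, if_true,
    if_false, add_zero, zero_add]
  linear_combination (x 0 ^ 2 + x 1 ^ 2) * Real.sin_sq_add_cos_sq α

/-- The vector field of `ℝ ⊕ ℂ ⊕ ℂ` along `ℝ³` whose only component is the one in the first copy
of `ℂ`, where it points in the azimuthal direction with amplitude `u`. It vanishes on the axis
because `0⁻¹ = 0`. -/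
def azimuthalField (u : E3 → ℝ) (x : E3) : V5 :=
  (0, u x • (Complex.I * (‖planar x‖⁻¹ • planar x)), 0)

lemma nsq_azimuthalField (u : E3 → ℝ) {x : E3} (hx : planar x ≠ 0) :
    nsq (azimuthalField u x) = u x ^ 2 := by
  have hn : ‖planar x‖ ≠ 0 := norm_ne_zero_iff.2 hx
  simp only [nsq, azimuthalField, Complex.normSq_eq_norm_sq, norm_smul, norm_mul, Complex.norm_I,
    norm_inv, Real.norm_eq_abs, abs_norm, norm_zero, mul_pow, sq_abs]
  field_simp
  ring

lemma fderiv_azimuthalField {u : E3 → ℝ} {x : E3} (hu : DifferentiableAt ℝ u x)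
    (hx : planar x ≠ 0) (v : E3) :
    fderiv ℝ (azimuthalField u) x v =
      (0, fderiv ℝ u x v • (Complex.I * (‖planar x‖⁻¹ • planar x)) +
        (u x * ‖planar x‖⁻¹) • (Complex.I * (planar v -
          ⟪‖planar x‖⁻¹ • planar x, planar v⟫_ℝ • ‖planar x‖⁻¹ • planar x)), 0) := by
  have hdir := ((hasFDerivAt_inv_norm_smul hx).comp x planar.hasFDerivAt).const_mul Complex.I
  have hfield : HasFDerivAt (azimuthalField u) _ x :=
    (hasFDerivAt_const (0 : ℝ) x).prodMk
      ((hu.hasFDerivAt.smul hdir).prodMk (hasFDerivAt_const (0 : ℂ) x))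
  rw [hfield.fderiv]
  simp [add_comm, mul_smul, mul_left_comm Complex.I]

lemma normSq_smul_add_smul_sub_inner {e : ℂ} (he : ‖e‖ = 1) (a b : ℝ) (w : ℂ) :
    Complex.normSq (a • (Complex.I * e) + b • (Complex.I * (w - ⟪e, w⟫_ℝ • e))) =
      a ^ 2 + b ^ 2 * (Complex.normSq w - ⟪e, w⟫_ℝ ^ 2) := by
  have hsq : e.re * e.re + e.im * e.im = 1 := by
    rw [← Complex.normSq_apply, Complex.normSq_eq_norm_sq, he, one_pow]
  simp only [Complex.normSq_apply, Complex.add_re, Complex.add_im, Complex.smul_re,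
    Complex.smul_im, Complex.mul_re, Complex.mul_im, Complex.I_re, Complex.I_im, Complex.sub_re,
    Complex.sub_im, Complex.inner, Complex.conj_re, Complex.conj_im, smul_eq_mul]
  linear_combination
    (a ^ 2 - 2 * a * b * (w.re * e.re + w.im * e.im) +
      b ^ 2 * (w.re * e.re + w.im * e.im) ^ 2) * hsq

lemma nsq_fderiv_azimuthalField {u : E3 → ℝ} {x : E3} (hu : DifferentiableAt ℝ u x)
    (hx : planar x ≠ 0) (v : E3) :
    nsq (fderiv ℝ (azimuthalField u) x v) = fderiv ℝ u x v ^ 2 +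
      u x ^ 2 / ‖planar x‖ ^ 2 *
        (Complex.normSq (planar v) - ⟪‖planar x‖⁻¹ • planar x, planar v⟫_ℝ ^ 2) := by
  have he : ‖‖planar x‖⁻¹ • planar x‖ = 1 := NormedSpace.norm_normalize hx
  rw [fderiv_azimuthalField hu hx, nsq, normSq_smul_add_smul_sub_inner he, map_zero]
  ring

lemma gradSq_azimuthalField {u : E3 → ℝ} {x : E3} (hu : DifferentiableAt ℝ u x)
    (hx : planar x ≠ 0) :
    gradSq (azimuthalField u) x = gradSqR u x + u x ^ 2 / (x 0 ^ 2 + x 1 ^ 2) := by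
  have hn : ‖planar x‖ ≠ 0 := norm_ne_zero_iff.2 hx
  have hsq : ‖planar x‖ ^ 2 = x 0 ^ 2 + x 1 ^ 2 := by
    rw [← Complex.normSq_eq_norm_sq, normSq_planar]
  have htrace : ∑ i, (Complex.normSq (planar (EuclideanSpace.single i 1)) -
      ⟪‖planar x‖⁻¹ • planar x, planar (EuclideanSpace.single i 1)⟫_ℝ ^ 2) = 1 := by
    simp only [real_inner_smul_left, Complex.inner, Complex.mul_re, Complex.conj_re,
      Complex.conj_im, planar_re, planar_im, normSq_planar, Fin.sum_univ_three, PiLp.single_apply,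
      Fin.reduceEq, if_true, if_false]
    field_simp
    linear_combination hsq
  simp only [gradSq, gradSqR, nsq_fderiv_azimuthalField hu hx]
  rw [Finset.sum_add_distrib, ← Finset.mul_sum, htrace, mul_one, hsq]

lemma gradSq_azimuthalField_of_notMem_tsupport {u : E3 → ℝ} {x : E3} (hx : x ∉ tsupport u) :
    gradSq (azimuthalField u) x = 0 := by
  have hzero : azimuthalField u =ᶠ[nhds x] fun _ => 0 := by
    filter_upwards [notMem_tsupport_iff_eventuallyEq.1 hx] with y hy
    simp [azimuthalField, hy]
  simp [gradSq, hzero.fderiv_eq, nsq]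

lemma tsupport_azimuthalField_subset (u : E3 → ℝ) : tsupport (azimuthalField u) ⊆ tsupport u :=
  closure_mono fun x hx hux => hx (by simp [azimuthalField, hux])

lemma contDiff_azimuthalField {n : WithTop ℕ∞} {u : E3 → ℝ} (hu : ContDiff ℝ n u)
    (hsupp : ∀ x ∈ tsupport u, planar x ≠ 0) : ContDiff ℝ n (azimuthalField u) := by
  refine contDiff_of_tsupport fun x hx => ?_
  have hdir : ContDiffAt ℝ n (fun x => ‖planar x‖⁻¹ • planar x) x :=
    (contDiffAt_inv_norm_smul (hsupp x (tsupport_azimuthalField_subset u hx))).comp x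
      planar.contDiff.contDiffAt
  exact contDiffAt_const.prodMk
    ((hu.contDiffAt.smul (contDiffAt_const.mul hdir)).prodMk contDiffAt_const)

lemma equivariantV_azimuthalField {u : E3 → ℝ} (hu : ∀ α x, u (rot3 α x) = u x) :
    EquivariantV (azimuthalField u) := by
  intro α x
  have hnorm : ‖planar (rot3 α x)‖ = ‖planar x‖ := by
    rw [planar_rot3, norm_mul, mul_comm Complex.I, Complex.norm_exp_ofReal_mul_I, one_mul]
  simp only [azimuthalField, circAct, hu, hnorm]
  simp only [planar_rot3, mul_zero, Complex.real_smul]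
  ring_nf

lemma tangPart_azimuthalField {w : E3 → V5}
    (hw : ∀ x, vdot (w x) (0, Complex.I * planar x, 0) = 0) (u : E3 → ℝ) :
    tangPart w (azimuthalField u) = azimuthalField u := by
  ext1 x
  have horth : vdot (w x) (azimuthalField u x) =
      u x * ‖planar x‖⁻¹ * vdot (w x) (0, Complex.I * planar x, 0) := by
    simp [vdot, azimuthalField]
    ring
  rw [tangPart, horth, hw, mul_zero, zero_smul, sub_zero]

end AzimuthalField

section SphereOffAxis

open Set Metric

/-- The surface measure of the unit sphere coming from polar coordinates in `ℝ³`. -/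
abbrev sphereMeasure : Measure (sphere (0 : E3) 1) := (volume : Measure E3).toSphere

lemma normSq_planar_eq (x : E3) : Complex.normSq (planar x) = ‖x‖ ^ 2 - x 2 ^ 2 := by
  rw [normSq_planar, EuclideanSpace.real_norm_sq_eq, Fin.sum_univ_three]
  ring

lemma planar_ne_zero_iff_mem_Ioo {y : E3} (hy : ‖y‖ = 1) :
    planar y ≠ 0 ↔ y 2 ∈ Ioo (-1 : ℝ) 1 := by
  rw [← Complex.normSq_pos, normSq_planar_eq, hy, one_pow, sub_pos, sq_lt_one_iff_abs_lt_one,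
    abs_lt, mem_Ioo]

lemma planar_ne_zero_of_inv_norm_smul {x : E3} (hx : planar (‖x‖⁻¹ • x) ≠ 0) : planar x ≠ 0 := by
  rw [map_smul] at hx
  exact right_ne_zero_of_smul hx

lemma planar_inv_norm_smul_ne_zero {x : E3} (hx : planar x ≠ 0) : planar (‖x‖⁻¹ • x) ≠ 0 := by
  have hx0 : x ≠ 0 := by
    rintro rfl
    simp at hx
  rw [map_smul]
  exact smul_ne_zero (inv_ne_zero (norm_ne_zero_iff.2 hx0)) hx

lemma integrable_sphere_of_tsupport_subset {k : ℝ → ℝ} {p : E3 → ℝ}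
    (hk : tsupport k ⊆ Ioo (-1) 1) (hp : ∀ y ∈ sphere (0 : E3) 1, planar y ≠ 0 → ContinuousAt p y)
    (hpk : ∀ y, y 2 ∉ tsupport k → p y = 0) :
    Integrable (fun y : sphere (0 : E3) 1 => p y) sphereMeasure := by
  have hsupp : tsupport (fun y : sphere (0 : E3) 1 => p y) ⊆ {y | (y : E3) 2 ∈ tsupport k} :=
    closure_minimal (fun y hy => by_contra fun h => hy (hpk y h))
      ((isClosed_tsupport k).preimage (by fun_prop))
  have hcont : Continuous (fun y : sphere (0 : E3) 1 => p y) :=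
    continuous_of_tsupport fun y hy =>
      (hp y y.2 ((planar_ne_zero_iff_mem_Ioo (norm_eq_of_mem_sphere y)).2
        (hk (hsupp hy)))).comp continuous_subtype_val.continuousAt
  exact hcont.integrable_of_hasCompactSupport (.of_compactSpace _)

end SphereOffAxis

section PolarCoordinatesE3

open Set Metric

lemma integral_mul_angular_E3 (a : ℝ → ℝ) (p : E3 → ℝ) :
    ∫ x : E3, a ‖x‖ * p (‖x‖⁻¹ • x) =
      (∫ r in Ioi (0 : ℝ), r ^ 2 * a r) * ∫ y : sphere (0 : E3) 1, p y ∂sphereMeasure := by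
  simpa using integral_radial_mul_angular (volume : Measure E3) a p

lemma integrable_mul_angular_E3 {a : ℝ → ℝ} {p : E3 → ℝ}
    (ha : IntegrableOn (fun r => r ^ 2 * a r) (Ioi 0))
    (hp : Integrable (fun y : sphere (0 : E3) 1 => p y) sphereMeasure) :
    Integrable fun x : E3 => a ‖x‖ * p (‖x‖⁻¹ • x) :=
  integrable_radial_mul_angular volume (by simpa using ha) hp

end PolarCoordinatesE3

section TestField

open Set Metric Filter Topology

/-- The amplitude `η(r) k(cos θ)` of the test fields, in spherical coordinates. -/
def zonalAmplitude (η k : ℝ → ℝ) (x : E3) : ℝ :=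
  η ‖x‖ * homExtR (fun y => k (y 2)) x

variable {η k : ℝ → ℝ}

lemma mem_tsupport_of_mem_tsupport_zonalAmplitude (hη : tsupport η ⊆ Ioi 0) {x : E3}
    (hx : x ∈ tsupport (zonalAmplitude η k)) :
    x ≠ 0 ∧ (‖x‖⁻¹ • x) 2 ∈ tsupport k := by
  have hradial : tsupport (zonalAmplitude η k) ⊆ {x | ‖x‖ ∈ tsupport η} :=
    closure_minimal (fun x hx => subset_tsupport η (left_ne_zero_of_mul hx))
      ((isClosed_tsupport η).preimage continuous_norm)
  have hx0 : x ≠ 0 := norm_pos_iff.1 (hη (hradial hx))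
  refine ⟨hx0, by_contra fun hs => ?_⟩
  have hcont : ContinuousAt (fun x : E3 => (‖x‖⁻¹ • x) 2) x :=
    (EuclideanSpace.proj (𝕜 := ℝ) (2 : Fin 3)).continuous.continuousAt.comp
      (hasFDerivAt_inv_norm_smul hx0).continuousAt
  refine notMem_tsupport_iff_eventuallyEq.2 ?_ hx
  filter_upwards [hcont.eventually (notMem_tsupport_iff_eventuallyEq.1 hs)] with y hy
  simp only [zonalAmplitude, homExtR, hy, Pi.zero_apply, mul_zero]

lemma planar_ne_zero_of_mem_tsupport_zonalAmplitude (hη : tsupport η ⊆ Ioi 0)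
    (hk : tsupport k ⊆ Ioo (-1) 1) {x : E3} (hx : x ∈ tsupport (zonalAmplitude η k)) :
    planar x ≠ 0 := by
  obtain ⟨hx0, hs⟩ := mem_tsupport_of_mem_tsupport_zonalAmplitude hη hx
  exact planar_ne_zero_of_inv_norm_smul
    ((planar_ne_zero_iff_mem_Ioo (NormedSpace.norm_normalize hx0)).2 (hk hs))

lemma contDiff_zonalAmplitude {n : WithTop ℕ∞} (hη : ContDiff ℝ n η) (hk : ContDiff ℝ n k)
    (hηs : tsupport η ⊆ Ioi 0) : ContDiff ℝ n (zonalAmplitude η k) := by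
  refine contDiff_of_tsupport fun x hx => ?_
  have hx0 := (mem_tsupport_of_mem_tsupport_zonalAmplitude hηs hx).1
  exact (hη.contDiffAt.comp x (contDiffAt_norm ℝ hx0)).mul (hk.contDiffAt.comp x
    ((EuclideanSpace.proj (𝕜 := ℝ) (2 : Fin 3)).contDiff.contDiffAt.comp x
      (contDiffAt_inv_norm_smul hx0)))

lemma hasCompactSupport_zonalAmplitude (hη : HasCompactSupport η) :
    HasCompactSupport (zonalAmplitude η k) := by
  obtain ⟨R, hR⟩ := hη.isCompact.isBounded.subset_closedBall 0
  refine .of_support_subset_isCompact (isCompact_closedBall (0 : E3) R) fun x hx => ?_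
  have := hR (subset_tsupport η (left_ne_zero_of_mul hx))
  simpa using this

lemma zonalAmplitude_rot3 (α : ℝ) (x : E3) :
    zonalAmplitude η k (rot3 α x) = zonalAmplitude η k x := by
  have hz : rot3 α x 2 = x 2 := by simp [rot3]
  simp only [zonalAmplitude, homExtR, norm_rot3, PiLp.smul_apply, hz]

lemma gradSqR_zonalAmplitude {x : E3} (hx : x ≠ 0) (hη : Differentiable ℝ η)
    (hk : Differentiable ℝ k) :
    gradSqR (zonalAmplitude η k) x = deriv η ‖x‖ ^ 2 * k ((‖x‖⁻¹ • x) 2) ^ 2 +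
      η ‖x‖ ^ 2 / ‖x‖ ^ 2 *
        ((1 - (‖x‖⁻¹ • x) 2 ^ 2) * deriv k ((‖x‖⁻¹ • x) 2) ^ 2) := by
  have hn : 0 < ‖x‖ := norm_pos_iff.2 hx
  have hdiff : DifferentiableAt ℝ (homExtR fun y => k (y 2)) x :=
    (hk _).comp x ((EuclideanSpace.proj (𝕜 := ℝ) (2 : Fin 3)).differentiableAt.comp x
      (hasFDerivAt_inv_norm_smul hx).differentiableAt)
  have hnorm : ‖‖x‖⁻¹ • x‖ = 1 := NormedSpace.norm_normalize hx
  have hscale := gradSqR_smul_of_homogeneous (homExtR_smul fun y => k (y 2)) hn (‖x‖⁻¹ • x)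
  rw [smul_inv_smul₀ hn.ne', gradSqR_homExtR_zonal hnorm (hk _)] at hscale
  unfold zonalAmplitude
  rw [gradSqR_radial_mul hx (hη _) hdiff (homExtR_smul _), hscale]
  simp only [homExtR]
  ring

end TestField

section SecondVariation

open Set Metric Module

/-- The energy density of the angular operator on a function `k (y 2)` of the height `s = y 2`:
the sum of `k² / 4`, of the squared spherical gradient and of `k² / sin² θ`. -/
def zonalDensity (k : ℝ → ℝ) (s : ℝ) : ℝ :=
  k s ^ 2 / 4 + (1 - s ^ 2) * deriv k s ^ 2 + k s ^ 2 / (1 - s ^ 2)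

variable {ω : E3 → V5} {η k : ℝ → ℝ}

lemma secondVar_density_azimuthalField
    (horth : ∀ x, vdot (homExt ω x) (0, Complex.I * planar x, 0) = 0)
    (hη : ContDiff ℝ 1 η) (hηs : tsupport η ⊆ Ioi 0)
    (hk : ContDiff ℝ 1 k) (hks : tsupport k ⊆ Ioo (-1) 1) {x : E3} (hx : x ≠ 0) :
    gradSq (tangPart (homExt ω) (azimuthalField (zonalAmplitude η k))) x -
        gradSq (homExt ω) x * nsq (tangPart (homExt ω) (azimuthalField (zonalAmplitude η k)) x) =
      deriv η ‖x‖ ^ 2 * k ((‖x‖⁻¹ • x) 2) ^ 2 + η ‖x‖ ^ 2 / ‖x‖ ^ 2 *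
        (zonalDensity k ((‖x‖⁻¹ • x) 2) -
          (gradSq (homExt ω) (‖x‖⁻¹ • x) + 1 / 4) * k ((‖x‖⁻¹ • x) 2) ^ 2) := by
  have hn : 0 < ‖x‖ := norm_pos_iff.2 hx
  have hnorm : ‖‖x‖⁻¹ • x‖ = 1 := NormedSpace.norm_normalize hx
  rw [tangPart_azimuthalField horth]
  by_cases haxis : planar x = 0
  · have hs : (‖x‖⁻¹ • x) 2 ∉ Ioo (-1 : ℝ) 1 := by
      rw [← planar_ne_zero_iff_mem_Ioo hnorm, map_smul, haxis, smul_zero]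
      simp
    have hks0 : k ((‖x‖⁻¹ • x) 2) = 0 := image_eq_zero_of_notMem_tsupport (mt (@hks _) hs)
    have hdk0 : deriv k ((‖x‖⁻¹ • x) 2) = 0 :=
      image_eq_zero_of_notMem_tsupport (mt (fun h => hks (tsupport_deriv_subset h)) hs)
    rw [gradSq_azimuthalField_of_notMem_tsupport fun h =>
      planar_ne_zero_of_mem_tsupport_zonalAmplitude hηs hks h haxis, zonalDensity, hks0,
      hdk0]
    simp [azimuthalField, haxis, nsq]
  · have hdiff : DifferentiableAt ℝ (zonalAmplitude η k) x :=
      (contDiff_zonalAmplitude hη hk hηs).differentiable one_ne_zero x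
    have hscale := gradSq_smul_of_homogeneous (homExt_smul ω) hn (‖x‖⁻¹ • x)
    have hdist : x 0 ^ 2 + x 1 ^ 2 = ‖x‖ ^ 2 * (1 - (‖x‖⁻¹ • x) 2 ^ 2) := by
      rw [← normSq_planar, normSq_planar_eq, PiLp.smul_apply, smul_eq_mul]
      field_simp
    rw [smul_inv_smul₀ hn.ne'] at hscale
    rw [gradSq_azimuthalField hdiff haxis, nsq_azimuthalField _ haxis,
      gradSqR_zonalAmplitude hx (hη.differentiable one_ne_zero)
      (hk.differentiable one_ne_zero), hscale, hdist]
    simp only [zonalDensity, zonalAmplitude, homExtR, div_eq_mul_inv, mul_inv]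
    ring

lemma continuous_nsq : Continuous nsq := by
  have := Complex.continuous_normSq
  unfold nsq
  fun_prop

lemma continuousAt_gradSq {f : E3 → V5} {x : E3} (hf : ContDiffAt ℝ 1 f x) :
    ContinuousAt (gradSq f) x := by
  have hd : ContinuousAt (fderiv ℝ f) x := hf.continuousAt_fderiv one_ne_zero
  unfold gradSq
  exact tendsto_finsetSum _ fun i _ =>
    continuous_nsq.continuousAt.comp (hd.clm_apply continuousAt_const)

lemma integrable_sq_height (hk : Continuous k) :
    Integrable (fun y : sphere (0 : E3) 1 => k ((y : E3) 2) ^ 2) sphereMeasure := by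
  have hcont : Continuous (fun y : sphere (0 : E3) 1 => k ((y : E3) 2) ^ 2) := by fun_prop
  exact hcont.integrable_of_hasCompactSupport (.of_compactSpace _)

lemma integrable_gradSq_mul_sq (hω : ∀ x, planar x ≠ 0 → ContDiffAt ℝ 1 (homExt ω) x)
    (hk : Continuous k) (hks : tsupport k ⊆ Ioo (-1) 1) :
    Integrable (fun y : sphere (0 : E3) 1 => gradSq (homExt ω) y * k ((y : E3) 2) ^ 2)
      sphereMeasure :=
  integrable_sphere_of_tsupport_subset (p := fun y => gradSq (homExt ω) y * k (y 2) ^ 2) hks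
    (fun y _ hy => (continuousAt_gradSq (hω y hy)).mul (by fun_prop))
    (fun y hy => by simp [image_eq_zero_of_notMem_tsupport hy])

lemma integrable_zonalDensity (hk : ContDiff ℝ 1 k) (hks : tsupport k ⊆ Ioo (-1) 1) :
    Integrable (fun y : sphere (0 : E3) 1 => zonalDensity k ((y : E3) 2))
      sphereMeasure := by
  refine integrable_sphere_of_tsupport_subset (p := fun y => zonalDensity k (y 2)) hks
    (fun y hy hpl => ?_) (fun y hy => ?_)
  · have hs : 1 - y 2 ^ 2 ≠ 0 := by
      have h := Complex.normSq_pos.2 hpl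
      rw [normSq_planar_eq, mem_sphere_zero_iff_norm.1 hy, one_pow] at h
      exact h.ne'
    have hk0 : Continuous k := hk.continuous
    have : Continuous (deriv k) := hk.continuous_deriv le_rfl
    unfold zonalDensity
    fun_prop (disch := assumption)
  · simp [zonalDensity, image_eq_zero_of_notMem_tsupport hy,
      image_eq_zero_of_notMem_tsupport fun h => hy (tsupport_deriv_subset h)]

lemma secondVar_azimuthalField (hω : ∀ x, planar x ≠ 0 → ContDiffAt ℝ 1 (homExt ω) x)
    (horth : ∀ x, vdot (homExt ω x) (0, Complex.I * planar x, 0) = 0)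
    (hη : ContDiff ℝ 1 η) (hηc : HasCompactSupport η) (hηs : tsupport η ⊆ Ioi 0)
    (hk : ContDiff ℝ 1 k) (hks : tsupport k ⊆ Ioo (-1) 1) :
    secondVar (homExt ω) (azimuthalField (zonalAmplitude η k)) =
      (∫ r in Ioi (0 : ℝ), r ^ 2 * deriv η r ^ 2) *
          ∫ y : sphere (0 : E3) 1, k ((y : E3) 2) ^ 2 ∂sphereMeasure +
        (∫ r in Ioi (0 : ℝ), η r ^ 2) *
          ∫ y : sphere (0 : E3) 1, (zonalDensity k ((y : E3) 2) -
            (gradSq (homExt ω) y + 1 / 4) * k ((y : E3) 2) ^ 2) ∂sphereMeasure := by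
  have hη0 : Continuous η := hη.continuous
  have : Continuous (deriv η) := hη.continuous_deriv le_rfl
  have hweight : EqOn (fun r : ℝ => η r ^ 2) (fun r => r ^ 2 * (η r ^ 2 / r ^ 2)) (Ioi 0) :=
    fun r hr => (mul_div_cancel₀ _ (pow_ne_zero 2 hr.out.ne')).symm
  have hrad1 : IntegrableOn (fun r => r ^ 2 * deriv η r ^ 2) (Ioi 0) := by
    have hsupp : HasCompactSupport fun r => r ^ 2 * deriv η r ^ 2 :=
      (hηc.deriv.comp_left (g := fun t => t ^ 2) (by simp)).mul_left
    exact (Continuous.integrable_of_hasCompactSupport (by fun_prop) hsupp).integrableOn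
  have hrad2 : IntegrableOn (fun r => r ^ 2 * (η r ^ 2 / r ^ 2)) (Ioi 0) := by
    have hsupp : HasCompactSupport fun r => η r ^ 2 := hηc.comp_left (g := fun t => t ^ 2) (by simp)
    exact (integrableOn_congr_fun hweight measurableSet_Ioi).1
      (Continuous.integrable_of_hasCompactSupport (by fun_prop) hsupp).integrableOn
  have hang2 : Integrable (fun y : sphere (0 : E3) 1 => zonalDensity k ((y : E3) 2) -
      (gradSq (homExt ω) y + 1 / 4) * k ((y : E3) 2) ^ 2) sphereMeasure := by
    simp only [add_mul]
    exact (integrable_zonalDensity hk hks).sub ((integrable_gradSq_mul_sq hω hk.continuous hks).add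
      ((integrable_sq_height hk.continuous).const_mul _))
  have hae : ∀ᵐ x : E3, x ≠ 0 := by simp [ae_iff, measure_singleton]
  rw [secondVar, integral_congr_ae (hae.mono fun x hx =>
      secondVar_density_azimuthalField horth hη hηs hk hks hx),
    integral_add (integrable_mul_angular_E3 (a := fun r => deriv η r ^ 2)
        (p := fun y => k (y 2) ^ 2) hrad1 (integrable_sq_height hk.continuous))
      (integrable_mul_angular_E3 (a := fun r => η r ^ 2 / r ^ 2) (p := fun y =>
        zonalDensity k (y 2) - (gradSq (homExt ω) y + 1 / 4) * k (y 2) ^ 2) hrad2 hang2),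
    integral_mul_angular_E3 (fun r => deriv η r ^ 2) fun y => k (y 2) ^ 2,
    integral_mul_angular_E3 (fun r => η r ^ 2 / r ^ 2)
      fun y => zonalDensity k (y 2) - (gradSq (homExt ω) y + 1 / 4) * k (y 2) ^ 2,
    setIntegral_congr_fun measurableSet_Ioi hweight]

lemma exists_radial_profile {ε : ℝ} (hε : 0 < ε) : ∃ η : ℝ → ℝ, ContDiff ℝ (⊤ : ℕ∞) η ∧
    HasCompactSupport η ∧ tsupport η ⊆ Ioi 0 ∧ 0 < ∫ r in Ioi (0 : ℝ), η r ^ 2 ∧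
    ∫ r in Ioi (0 : ℝ), r ^ 2 * deriv η r ^ 2 ≤ (1 / 4 + ε) * ∫ r in Ioi (0 : ℝ), η r ^ 2 := by
  have h := hardy_sharp (1 / 2) hε
  norm_num at h ⊢
  exact h

lemma angular_form_nonneg (hω : ∀ x, planar x ≠ 0 → ContDiffAt ℝ 1 (homExt ω) x)
    (horth : ∀ x, vdot (homExt ω x) (0, Complex.I * planar x, 0) = 0)
    (hstab : IsStable (homExt ω)) (hk : ContDiff ℝ (⊤ : ℕ∞) k) (hks : tsupport k ⊆ Ioo (-1) 1) :
    0 ≤ 1 / 4 * ∫ y : sphere (0 : E3) 1, k ((y : E3) 2) ^ 2 ∂sphereMeasure +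
      ∫ y : sphere (0 : E3) 1, (zonalDensity k ((y : E3) 2) -
        (gradSq (homExt ω) y + 1 / 4) * k ((y : E3) 2) ^ 2) ∂sphereMeasure := by
  set K := ∫ y : sphere (0 : E3) 1, k ((y : E3) 2) ^ 2 ∂sphereMeasure
  set Q := ∫ y : sphere (0 : E3) 1, (zonalDensity k ((y : E3) 2) -
    (gradSq (homExt ω) y + 1 / 4) * k ((y : E3) 2) ^ 2) ∂sphereMeasure
  have hK0 : 0 ≤ K := integral_nonneg fun y => sq_nonneg _
  have hlim : Filter.Tendsto (fun ε : ℝ => (1 / 4 + ε) * K + Q) (nhdsWithin 0 (Ioi 0))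
      (nhds ((1 / 4 + 0) * K + Q)) :=
    (Continuous.tendsto (by fun_prop) 0).mono_left nhdsWithin_le_nhds
  rw [add_zero] at hlim
  refine ge_of_tendsto hlim (eventually_mem_nhdsWithin.mono fun ε hε => ?_)
  obtain ⟨η, hη, hηc, hηs, hpos, hle⟩ := exists_radial_profile hε
  have hvar := hstab _ (contDiff_azimuthalField (contDiff_zonalAmplitude hη hk hηs) fun x =>
      planar_ne_zero_of_mem_tsupport_zonalAmplitude hηs hks)
    ((hasCompactSupport_zonalAmplitude hηc).of_isClosed_subset (isClosed_tsupport _)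
      (tsupport_azimuthalField_subset _))
    (equivariantV_azimuthalField zonalAmplitude_rot3)
  rw [secondVar_azimuthalField hω horth (hη.of_le (by simp)) hηc hηs (hk.of_le (by simp)) hks]
    at hvar
  have hscaled := hvar.trans (add_le_add_left (mul_le_mul_of_nonneg_right hle hK0) _)
  refine nonneg_of_mul_nonneg_right (hscaled.trans_eq ?_) hpos
  ring

theorem integral_gradSq_mul_sq_le_of_contDiff
    (hω : ∀ x, planar x ≠ 0 → ContDiffAt ℝ 1 (homExt ω) x)
    (horth : ∀ x, vdot (homExt ω x) (0, Complex.I * planar x, 0) = 0)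
    (hstab : IsStable (homExt ω)) (hk : ContDiff ℝ (⊤ : ℕ∞) k) (hks : tsupport k ⊆ Ioo (-1) 1) :
    ∫ y : sphere (0 : E3) 1, gradSq (homExt ω) y * k ((y : E3) 2) ^ 2 ∂sphereMeasure ≤
      ∫ y : sphere (0 : E3) 1, zonalDensity k ((y : E3) 2) ∂sphereMeasure := by
  have hW := integrable_gradSq_mul_sq hω hk.continuous hks
  have hK := (integrable_sq_height hk.continuous).const_mul (1 / 4)
  have hZ := integrable_zonalDensity (hk.of_le (by simp)) hks
  have hnonneg := angular_form_nonneg hω horth hstab hk hks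
  simp only [add_mul] at hnonneg
  rw [integral_sub hZ (hW.fun_add hK), integral_add hW hK, integral_const_mul] at hnonneg
  linarith

end SecondVariation

section Limits

open Filter Topology

lemma integral_le_of_tendsto {α : Type*} [MeasurableSpace α] {μ : Measure α} {f : ℕ → α → ℝ}
    {F : α → ℝ} {c : ℕ → ℝ} {C : ℝ} (hf : ∀ n, Integrable (f n) μ) (hf0 : ∀ n, 0 ≤ f n)
    (hlim : ∀ x, Tendsto (fun n => f n x) atTop (𝓝 (F x))) (hle : ∀ n, ∫ x, f n x ∂μ ≤ c n)
    (hc : Tendsto c atTop (𝓝 C)) : ∫ x, F x ∂μ ≤ C := by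
  have hF0 : ∀ x, 0 ≤ F x := fun x => ge_of_tendsto' (hlim x) fun n => hf0 n x
  have hC0 : 0 ≤ C := ge_of_tendsto' hc fun n => (integral_nonneg (hf0 n)).trans (hle n)
  rw [integral_eq_lintegral_of_nonneg_ae (.of_forall hF0)
    (aestronglyMeasurable_of_tendsto_ae atTop (fun n => (hf n).1) (.of_forall hlim))]
  refine ENNReal.toReal_le_of_le_ofReal hC0 ?_
  calc ∫⁻ x, ENNReal.ofReal (F x) ∂μ
      = ∫⁻ x, liminf (fun n => ENNReal.ofReal (f n x)) atTop ∂μ :=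
        lintegral_congr fun x => (ENNReal.tendsto_ofReal (hlim x)).liminf_eq.symm
    _ ≤ liminf (fun n => ∫⁻ x, ENNReal.ofReal (f n x) ∂μ) atTop :=
        lintegral_liminf_le' fun n => (hf n).1.aemeasurable.ennreal_ofReal
    _ ≤ liminf (fun n => ENNReal.ofReal (c n)) atTop := by
        refine liminf_le_liminf (.of_forall fun n => ?_)
        rw [← ofReal_integral_eq_lintegral_ofReal (hf n) (.of_forall (hf0 n))]
        exact ENNReal.ofReal_le_ofReal (hle n)
    _ = ENNReal.ofReal C := (ENNReal.tendsto_ofReal hc).liminf_eq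

end Limits

section Mollification

open Metric Function Convolution

variable {F : Type*} [NormedAddCommGroup F] [NormedSpace ℝ F] [CompleteSpace F] {f : ℝ → F}
  {δ ε : ℝ}

lemma exists_contDiff_approx (hf : ContDiff ℝ 1 f) (hfc : HasCompactSupport f) (hδ : 0 < δ)
    (hε : 0 < ε) : ∃ φ : ℝ → F, ContDiff ℝ (⊤ : ℕ∞) φ ∧
      tsupport φ ⊆ cthickening δ (tsupport f) ∧
      ∀ x, dist (φ x) (f x) ≤ ε ∧ dist (deriv φ x) (deriv f x) ≤ ε := by
  have hf' : Continuous (deriv f) := hf.continuous_deriv le_rfl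
  obtain ⟨r, hr, hfr⟩ := uniformContinuous_iff.1
    (hfc.uniformContinuous_of_continuous hf.continuous) ε hε
  obtain ⟨r', hr', hfr'⟩ := uniformContinuous_iff.1
    (hfc.deriv.uniformContinuous_of_continuous hf') ε hε
  have hR : 0 < min (min r r') δ := lt_min (lt_min hr hr') hδ
  let ρ : ContDiffBump (0 : ℝ) := ⟨_, _, half_pos hR, half_lt_self hR⟩
  have hball {x y : ℝ} (hy : y ∈ ball x ρ.rOut) : dist y x < r ∧ dist y x < r' ∧ dist y x < δ := by
    simpa only [mem_ball, ρ, lt_min_iff, and_assoc] using hy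
  refine ⟨ρ.normed volume ⋆[ContinuousLinearMap.lsmul ℝ ℝ, volume] f,
    ρ.hasCompactSupport_normed.contDiff_convolution_left _ ρ.contDiff_normed
      hf.continuous.locallyIntegrable,
    closure_minimal (fun x hx => by_contra fun hxs => hx ?_) isClosed_cthickening,
    fun x => ⟨ρ.dist_normed_convolution_le hf.continuous.aestronglyMeasurable
      fun y hy => (hfr (hball hy).1).le, ?_⟩⟩
  · have hvanish : ∀ y ∈ ball x ρ.rOut, f y = f x := fun y hy => by
      rw [image_eq_zero_of_notMem_tsupport fun hys => hxs
          (mem_cthickening_of_dist_le x y δ _ hys (dist_comm x y ▸ (hball hy).2.2.le)),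
        image_eq_zero_of_notMem_tsupport (mt (@self_subset_cthickening _ _ δ _ x) hxs)]
    rw [ρ.normed_convolution_eq_right hvanish]
    exact image_eq_zero_of_notMem_tsupport (mt (@self_subset_cthickening _ _ δ _ x) hxs)
  · rw [(hfc.hasDerivAt_convolution_right _ ρ.continuous_normed.locallyIntegrable hf x).deriv]
    exact ρ.dist_normed_convolution_le hf'.aestronglyMeasurable fun y hy => (hfr' (hball hy).2.1).le

end Mollification

section ContDiffOneProfiles

open Set Metric Filter Topology

variable {ω : E3 → V5} {k : ℝ → ℝ}

lemma gradSq_nonneg (f : E3 → V5) (x : E3) : 0 ≤ gradSq f x :=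
  Finset.sum_nonneg fun _ _ =>
    add_nonneg (add_nonneg (sq_nonneg _) (Complex.normSq_nonneg _)) (Complex.normSq_nonneg _)

lemma zonalDensity_nonneg (k : ℝ → ℝ) {s : ℝ} (hs : s ∈ Icc (-1 : ℝ) 1) : 0 ≤ zonalDensity k s := by
  have : 0 ≤ 1 - s ^ 2 := sub_nonneg.2 ((sq_le_one_iff_abs_le_one s).2 (abs_le.2 hs))
  unfold zonalDensity
  positivity

lemma zonalDensity_le {s A B : ℝ} (hs : s ∈ Icc (-1 : ℝ) 1) (hk : |k s| ≤ A)
    (hk' : |deriv k s| ≤ A) (hB : (1 - s ^ 2)⁻¹ ≤ B) :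
    zonalDensity k s ≤ A ^ 2 / 4 + A ^ 2 + A ^ 2 * B := by
  have hs0 : 0 ≤ 1 - s ^ 2 := sub_nonneg.2 ((sq_le_one_iff_abs_le_one s).2 (abs_le.2 hs))
  have hk2 : k s ^ 2 ≤ A ^ 2 := sq_le_sq' (abs_le.1 hk).1 (abs_le.1 hk).2
  have hk2' : deriv k s ^ 2 ≤ A ^ 2 := sq_le_sq' (abs_le.1 hk').1 (abs_le.1 hk').2
  have hgrad : (1 - s ^ 2) * deriv k s ^ 2 ≤ A ^ 2 :=
    (mul_le_of_le_one_left (sq_nonneg _) (by linarith [sq_nonneg s])).trans hk2'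
  rw [zonalDensity, div_eq_mul_inv (k s ^ 2) (1 - s ^ 2)]
  gcongr

lemma height_mem_Icc (y : sphere (0 : E3) 1) : (y : E3) 2 ∈ Icc (-1 : ℝ) 1 := by
  have h := PiLp.norm_apply_le (y : E3) 2
  rw [norm_eq_of_mem_sphere, Real.norm_eq_abs] at h
  exact abs_le.1 h

lemma tendsto_integral_zonalDensity {κ : ℕ → ℝ → ℝ} {K : Set ℝ} {A : ℝ} (hK : IsCompact K)
    (hK1 : K ⊆ Ioo (-1) 1) (hκ : ∀ n, ContDiff ℝ 1 (κ n)) (hκK : ∀ n, tsupport (κ n) ⊆ K)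
    (hA : ∀ n s, |κ n s| ≤ A) (hA' : ∀ n s, |deriv (κ n) s| ≤ A)
    (hlim : ∀ s, Tendsto (fun n => κ n s) atTop (𝓝 (k s)))
    (hlim' : ∀ s, Tendsto (fun n => deriv (κ n) s) atTop (𝓝 (deriv k s))) :
    Tendsto (fun n => ∫ y : sphere (0 : E3) 1, zonalDensity (κ n) ((y : E3) 2) ∂sphereMeasure)
      atTop (𝓝 (∫ y : sphere (0 : E3) 1, zonalDensity k ((y : E3) 2) ∂sphereMeasure)) := by
  have hpos {s : ℝ} (hs : s ∈ K) : 0 < 1 - s ^ 2 :=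
    sub_pos.2 ((sq_lt_one_iff_abs_lt_one s).2 (abs_lt.2 (hK1 hs)))
  have hcont : ContinuousOn (fun s : ℝ => (1 - s ^ 2)⁻¹) K :=
    ContinuousOn.inv₀ (by fun_prop) fun s hs => (hpos hs).ne'
  obtain ⟨B, hB⟩ := hK.exists_bound_of_continuousOn hcont
  refine tendsto_integral_of_dominated_convergence (fun _ => A ^ 2 / 4 + A ^ 2 + A ^ 2 * |B|)
    (fun n => (integrable_zonalDensity (hκ n) ((hκK n).trans hK1)).1) (integrable_const _)
    (fun n => .of_forall fun y => ?_) (.of_forall fun y => ?_)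
  · rw [Real.norm_of_nonneg (zonalDensity_nonneg _ (height_mem_Icc y))]
    by_cases hy : (y : E3) 2 ∈ K
    · exact zonalDensity_le (height_mem_Icc y) (hA n _) (hA' n _)
        ((le_abs_self _).trans ((hB _ hy).trans (le_abs_self B)))
    · have hzero : zonalDensity (κ n) ((y : E3) 2) = 0 := by
        simp [zonalDensity, image_eq_zero_of_notMem_tsupport (mt (@hκK n _) hy),
          image_eq_zero_of_notMem_tsupport fun h => hy (hκK n (tsupport_deriv_subset h))]
      rw [hzero]
      positivity
  · exact ((((hlim _).pow 2).div_const _).add (((hlim' _).pow 2).const_mul _)).add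
      (((hlim _).pow 2).div_const _)

theorem integral_gradSq_mul_sq_le_of_tsupport_subset
    (hω : ∀ x, planar x ≠ 0 → ContDiffAt ℝ 1 (homExt ω) x)
    (horth : ∀ x, vdot (homExt ω x) (0, Complex.I * planar x, 0) = 0)
    (hstab : IsStable (homExt ω)) (hk : ContDiff ℝ 1 k) (hks : tsupport k ⊆ Ioo (-1) 1) :
    ∫ y : sphere (0 : E3) 1, gradSq (homExt ω) y * k ((y : E3) 2) ^ 2 ∂sphereMeasure ≤
      ∫ y : sphere (0 : E3) 1, zonalDensity k ((y : E3) 2) ∂sphereMeasure := by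
  have hkc : HasCompactSupport k :=
    .of_support_subset_isCompact isCompact_Icc
      (((subset_tsupport k).trans hks).trans Ioo_subset_Icc_self)
  obtain ⟨δ, hδ, hδU⟩ := hkc.isCompact.exists_cthickening_subset_open isOpen_Ioo hks
  choose κ hκ hκs hκd using fun n : ℕ =>
    exists_contDiff_approx hk hkc hδ (Nat.one_div_pos_of_nat (α := ℝ) (n := n))
  have hlim s : Tendsto (fun n => κ n s) atTop (𝓝 (k s)) :=
    tendsto_iff_dist_tendsto_zero.2 (squeeze_zero (fun _ => dist_nonneg) (fun n => (hκd n s).1)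
      tendsto_one_div_add_atTop_nhds_zero_nat)
  have hlim' s : Tendsto (fun n => deriv (κ n) s) atTop (𝓝 (deriv k s)) :=
    tendsto_iff_dist_tendsto_zero.2 (squeeze_zero (fun _ => dist_nonneg) (fun n => (hκd n s).2)
      tendsto_one_div_add_atTop_nhds_zero_nat)
  obtain ⟨A, hA⟩ := hkc.exists_bound_of_continuous hk.continuous
  obtain ⟨A', hA'⟩ := hkc.deriv.exists_bound_of_continuous (hk.continuous_deriv le_rfl)
  have hunif (n : ℕ) {a b C : ℝ} (hab : dist a b ≤ 1 / ((n : ℝ) + 1)) (hb : ‖b‖ ≤ C) :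
      |a| ≤ C + 1 := by
    have h1 : 1 / ((n : ℝ) + 1) ≤ 1 := div_le_one_of_le₀ (by simp) (by positivity)
    rw [Real.dist_eq] at hab
    linarith [abs_sub_abs_le_abs_sub a b, Real.norm_eq_abs b]
  refine integral_le_of_tendsto
    (f := fun n (y : sphere (0 : E3) 1) => gradSq (homExt ω) y * κ n ((y : E3) 2) ^ 2)
    (fun n => integrable_gradSq_mul_sq hω (hκ n).continuous ((hκs n).trans hδU))
    (fun n y => mul_nonneg (gradSq_nonneg _ _) (sq_nonneg _))
    (fun y => ((hlim _).pow 2).const_mul _)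
    (fun n => integral_gradSq_mul_sq_le_of_contDiff hω horth hstab (hκ n) ((hκs n).trans hδU))
    (tendsto_integral_zonalDensity hkc.isCompact.cthickening hδU
      (fun n => (hκ n).of_le (by simp)) hκs (A := max A A' + 1)
      (fun n s => hunif n (hκd n s).1 ((hA s).trans (le_max_left _ _)))
      (fun n s => hunif n (hκd n s).2 ((hA' s).trans (le_max_right _ _))) hlim hlim')

end ContDiffOneProfiles

section SoftTruncation

open Set Filter Topology intervalIntegral

/-- The derivative of `softTruncation δ`: it vanishes for `|t| ≤ δ`, equals `1` for `2δ ≤ |t|`, and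
is affine in `|t|` in between. -/
def truncationSlope (δ t : ℝ) : ℝ := max 0 (min 1 (|t| / δ - 1))

/-- A `C¹` approximation of the identity of `ℝ` that vanishes on `[-δ, δ]`. -/
def softTruncation (δ s : ℝ) : ℝ := ∫ t in (0 : ℝ)..s, truncationSlope δ t

lemma continuous_truncationSlope (δ : ℝ) : Continuous (truncationSlope δ) := by
  unfold truncationSlope
  fun_prop

lemma norm_truncationSlope_le_one (δ t : ℝ) : ‖truncationSlope δ t‖ ≤ 1 := by
  rw [truncationSlope, Real.norm_of_nonneg (le_max_left _ _)]
  exact max_le zero_le_one (min_le_left _ _)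

lemma truncationSlope_eq_zero {δ t : ℝ} (ht : |t| ≤ δ) : truncationSlope δ t = 0 :=
  max_eq_left ((min_le_right _ _).trans
    (sub_nonpos.2 (div_le_one_of_le₀ ht ((abs_nonneg t).trans ht))))

lemma truncationSlope_eq_one {δ t : ℝ} (hδ : 0 < δ) (ht : 2 * δ ≤ |t|) :
    truncationSlope δ t = 1 := by
  have h : 1 ≤ |t| / δ - 1 := by linarith [(le_div_iff₀ hδ).2 ht]
  rw [truncationSlope, min_eq_left h, max_eq_right zero_le_one]

lemma hasDerivAt_softTruncation (δ s : ℝ) :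
    HasDerivAt (softTruncation δ) (truncationSlope δ s) s :=
  ((continuous_truncationSlope δ).integral_hasStrictDerivAt 0 s).hasDerivAt

lemma contDiff_softTruncation (δ : ℝ) : ContDiff ℝ 1 (softTruncation δ) := by
  have hderiv : deriv (softTruncation δ) = truncationSlope δ :=
    funext fun s => (hasDerivAt_softTruncation δ s).deriv
  rw [contDiff_one_iff_deriv, hderiv]
  exact ⟨fun s => (hasDerivAt_softTruncation δ s).differentiableAt, continuous_truncationSlope δ⟩

lemma abs_softTruncation_le (δ s : ℝ) : |softTruncation δ s| ≤ |s| := by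
  simpa [softTruncation] using norm_integral_le_of_norm_le_const (a := 0) (b := s)
    fun t _ => norm_truncationSlope_le_one δ t

lemma softTruncation_eq_zero {δ s : ℝ} (hs : |s| ≤ δ) : softTruncation δ s = 0 := by
  have hzero : EqOn (truncationSlope δ) (fun _ => 0) (uIcc 0 s) := fun t ht =>
    truncationSlope_eq_zero ((by simpa using abs_sub_left_of_mem_uIcc ht : |t| ≤ |s|).trans hs)
  rw [softTruncation, integral_congr hzero, intervalIntegral.integral_zero]

lemma tendsto_softTruncation (s : ℝ) :
    Tendsto (fun δ => softTruncation δ s) (𝓝[>] 0) (𝓝 s) := by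
  have hslope : ∀ᵐ t, t ∈ uIoc 0 s → Tendsto (fun δ => truncationSlope δ t) (𝓝[>] 0) (𝓝 1) := by
    have hne : ∀ᵐ t : ℝ, t ≠ 0 := by simp [ae_iff]
    filter_upwards [hne] with t ht _
    refine tendsto_const_nhds.congr' ?_
    filter_upwards [Ioo_mem_nhdsGT (half_pos (abs_pos.2 ht))] with δ hδ
    exact (truncationSlope_eq_one hδ.1 (by linarith [hδ.2])).symm
  have h := tendsto_integral_filter_of_dominated_convergence (fun _ => (1 : ℝ))
    (.of_forall fun δ => (continuous_truncationSlope δ).aestronglyMeasurable)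
    (.of_forall fun δ => .of_forall fun t _ => norm_truncationSlope_le_one δ t)
    intervalIntegrable_const hslope
  rwa [intervalIntegral.integral_const, sub_zero, smul_eq_mul, mul_one] at h

end SoftTruncation

section VanishingAtPoles

open Set Metric Filter Topology

variable {ω : E3 → V5} {k : ℝ → ℝ} {δ : ℝ}

lemma tsupport_softTruncation_comp_subset (hk : Continuous k) (hk0 : ∀ s ∉ Ioo (-1 : ℝ) 1, k s = 0)
    (hδ : 0 < δ) : tsupport (softTruncation δ ∘ k) ⊆ Ioo (-1) 1 := by
  have hsub : tsupport (softTruncation δ ∘ k) ⊆ {s | δ ≤ |k s|} :=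
    closure_minimal (fun s hs => le_of_not_gt fun h => hs (softTruncation_eq_zero h.le))
      (isClosed_le continuous_const hk.abs)
  refine fun s hs => by_contra fun h => (hsub hs).out.not_gt ?_
  rwa [hk0 s h, abs_zero]

lemma contDiff_softTruncation_comp (hk : Continuous k) (hk0 : ∀ s ∉ Ioo (-1 : ℝ) 1, k s = 0)
    (hk1 : ContDiffOn ℝ 1 k (Ioo (-1) 1)) (hδ : 0 < δ) : ContDiff ℝ 1 (softTruncation δ ∘ k) :=
  contDiff_of_tsupport fun s hs => (contDiff_softTruncation δ).contDiffAt.comp s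
    (hk1.contDiffAt (isOpen_Ioo.mem_nhds (tsupport_softTruncation_comp_subset hk hk0 hδ hs)))

lemma zonalDensity_softTruncation_comp_le (hk1 : ContDiffOn ℝ 1 k (Ioo (-1) 1)) {s : ℝ}
    (hs : s ∈ Icc (-1 : ℝ) 1) :
    zonalDensity (softTruncation δ ∘ k) s ≤ zonalDensity k s := by
  have hsq : softTruncation δ (k s) ^ 2 ≤ k s ^ 2 := sq_le_sq.2 (abs_softTruncation_le _ _)
  by_cases hs' : s ∈ Ioo (-1 : ℝ) 1
  · have hs0 : 0 < 1 - s ^ 2 := sub_pos.2 ((sq_lt_one_iff_abs_lt_one s).2 (abs_lt.2 hs'))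
    have hderiv : deriv (softTruncation δ ∘ k) s = truncationSlope δ (k s) * deriv k s :=
      ((hasDerivAt_softTruncation δ (k s)).comp s ((hk1.contDiffAt
        (isOpen_Ioo.mem_nhds hs')).differentiableAt one_ne_zero).hasDerivAt).deriv
    have hslope : deriv (softTruncation δ ∘ k) s ^ 2 ≤ deriv k s ^ 2 := by
      rw [hderiv, mul_pow]
      exact mul_le_of_le_one_left (sq_nonneg _)
        ((sq_le_one_iff_abs_le_one _).2 (norm_truncationSlope_le_one _ _))
    unfold zonalDensity
    dsimp only [Function.comp_apply]
    gcongr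
  · have hpole : 1 - s ^ 2 = 0 := by
      rcases eq_endpoints_or_mem_Ioo_of_mem_Icc hs with rfl | rfl | h
      · norm_num
      · norm_num
      · exact absurd h hs'
    simp only [zonalDensity, hpole, zero_mul, div_zero, add_zero, Function.comp_apply]
    gcongr

theorem integral_gradSq_mul_sq_le
    (hω : ∀ x, planar x ≠ 0 → ContDiffAt ℝ 1 (homExt ω) x)
    (horth : ∀ x, vdot (homExt ω x) (0, Complex.I * planar x, 0) = 0)
    (hstab : IsStable (homExt ω)) (hk : Continuous k) (hk0 : ∀ s ∉ Ioo (-1 : ℝ) 1, k s = 0)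
    (hk1 : ContDiffOn ℝ 1 k (Ioo (-1) 1))
    (hint : Integrable (fun y : sphere (0 : E3) 1 => zonalDensity k ((y : E3) 2)) sphereMeasure) :
    ∫ y : sphere (0 : E3) 1, gradSq (homExt ω) y * k ((y : E3) 2) ^ 2 ∂sphereMeasure ≤
      ∫ y : sphere (0 : E3) 1, zonalDensity k ((y : E3) 2) ∂sphereMeasure := by
  have hδ (n : ℕ) : 0 < 1 / ((n : ℝ) + 1) := Nat.one_div_pos_of_nat
  have hδ0 : Tendsto (fun n : ℕ => 1 / ((n : ℝ) + 1)) atTop (𝓝[>] 0) :=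
    tendsto_nhdsWithin_iff.2 ⟨tendsto_one_div_add_atTop_nhds_zero_nat, .of_forall hδ⟩
  have hts (n : ℕ) := tsupport_softTruncation_comp_subset hk hk0 (hδ n)
  have hC (n : ℕ) := contDiff_softTruncation_comp hk hk0 hk1 (hδ n)
  refine integral_le_of_tendsto
    (f := fun n (y : sphere (0 : E3) 1) =>
      gradSq (homExt ω) y * (softTruncation (1 / ((n : ℝ) + 1)) ∘ k) ((y : E3) 2) ^ 2)
    (fun n => integrable_gradSq_mul_sq hω (hC n).continuous (hts n))
    (fun n y => mul_nonneg (gradSq_nonneg _ _) (sq_nonneg _))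
    (fun y => (((tendsto_softTruncation _).comp hδ0).pow 2).const_mul _)
    (fun n => (integral_gradSq_mul_sq_le_of_tsupport_subset hω horth hstab (hC n) (hts n)).trans
      (integral_mono (integrable_zonalDensity (hC n) (hts n)) hint fun y =>
        zonalDensity_softTruncation_comp_le hk1 (height_mem_Icc y)))
    tendsto_const_nhds

end VanishingAtPoles

section SphericalCoordinates

open Set Metric

/-- The half great circle from the north pole (`θ = 0`) to the south pole (`θ = π`). -/
def meridian (θ : ℝ) : E3 :=
  EuclideanSpace.single (0 : Fin 3) (Real.sin θ) + EuclideanSpace.single (2 : Fin 3) (Real.cos θ)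

lemma contDiff_meridian {n : WithTop ℕ∞} : ContDiff ℝ n meridian := by
  rw [contDiff_euclidean]
  intro i
  simp only [meridian, PiLp.add_apply, PiLp.single_apply]
  split_ifs <;> fun_prop

lemma meridian_mem_sphere2 (θ : ℝ) : meridian θ ∈ sphere2 := by
  rw [sphere2, mem_sphere_zero_iff_norm, ← sq_eq_sq₀ (norm_nonneg _) zero_le_one,
    EuclideanSpace.real_norm_sq_eq, Fin.sum_univ_three]
  simp [meridian]

lemma exists_rot3_meridian {y : E3} (hy : y ∈ sphere2) :
    ∃ α ∈ Icc (-Real.pi) Real.pi, rot3 α (meridian (Real.arccos (y 2))) = y := by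
  have hheight := height_mem_Icc ⟨y, hy⟩
  have hnorm : ‖planar y‖ = Real.sqrt (1 - y 2 ^ 2) := by
    rw [Complex.norm_def, normSq_planar_eq, mem_sphere_zero_iff_norm.1 hy, one_pow]
  have hre := Complex.norm_mul_cos_arg (planar y)
  have him := Complex.norm_mul_sin_arg (planar y)
  rw [hnorm, planar_re] at hre
  rw [hnorm, planar_im] at him
  refine ⟨(planar y).arg, ⟨(Complex.neg_pi_lt_arg _).le, Complex.arg_le_pi _⟩, ?_⟩
  ext i
  fin_cases i
  · simp [rot3, meridian, Real.sin_arccos, ← hre, mul_comm]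
  · simp [rot3, meridian, Real.sin_arccos, ← him, mul_comm]
  · simp [rot3, meridian, Real.cos_arccos hheight.1 hheight.2]

lemma surf_sphere2_ne_top : surf sphere2 ≠ ⊤ := by
  let chart : (Fin 2 → ℝ) → E3 := fun v => rot3 (v 0) (meridian (v 1))
  let K : Set (Fin 2 → ℝ) := Icc (fun _ => -Real.pi) (fun _ => Real.pi)
  have hchart : ContDiff ℝ 1 chart := by
    rw [contDiff_euclidean]
    intro i
    simp only [chart, rot3, meridian, PiLp.add_apply, PiLp.single_apply]
    split_ifs <;> fun_prop
  obtain ⟨C, hC⟩ := hchart.contDiffOn.exists_lipschitzOnWith (s := K) one_ne_zero (convex_Icc _ _)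
    isCompact_Icc
  have hcover : sphere2 ⊆ chart '' K := by
    intro y hy
    obtain ⟨α, hα, hαy⟩ := exists_rot3_meridian hy
    have harccos : -Real.pi ≤ Real.arccos (y 2) :=
      (neg_nonpos.2 Real.pi_pos.le).trans (Real.arccos_nonneg _)
    refine ⟨![α, Real.arccos (y 2)], ⟨fun i => ?_, fun i => ?_⟩, hαy⟩
    · fin_cases i
      exacts [hα.1, harccos]
    · fin_cases i
      exacts [hα.2, Real.arccos_le_pi _]
  have hK : Measure.hausdorffMeasure 2 K ≠ ⊤ := by
    have hvol := hausdorffMeasure_pi_real (ι := Fin 2)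
    rw [Fintype.card_fin, Nat.cast_ofNat] at hvol
    exact hvol ▸ isCompact_Icc.measure_ne_top
  refine ne_top_of_le_ne_top (ENNReal.mul_ne_top (by simp) hK)
    ((measure_mono hcover).trans (hC.hausdorffMeasure_image_le zero_le_two))

end SphericalCoordinates

section Profile

open Set Metric Filter Topology

/-- The value of the invariant function `g` on the parallel of height `s`. -/
def profile (g : E3 → ℝ) (s : ℝ) : ℝ := homExtR g (meridian (Real.arccos s))

variable {g : E3 → ℝ}

lemma homExtR_of_mem_sphere2 (g : E3 → ℝ) {y : E3} (hy : y ∈ sphere2) : homExtR g y = g y := by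
  rw [homExtR, mem_sphere_zero_iff_norm.1 hy, inv_one, one_smul]

lemma ne_zero_of_mem_sphere2 {y : E3} (hy : y ∈ sphere2) : y ≠ 0 :=
  ne_of_mem_sphere hy one_ne_zero

lemma eq_profile (hinv : ∀ α : ℝ, ∀ y ∈ sphere2, g (rot3 α y) = g y) {y : E3} (hy : y ∈ sphere2) :
    g y = profile g (y 2) := by
  obtain ⟨α, -, hα⟩ := exists_rot3_meridian hy
  rw [profile, homExtR_of_mem_sphere2 g (meridian_mem_sphere2 _),
    ← hinv α _ (meridian_mem_sphere2 _), hα]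

lemma contDiff_homExtR_meridian (hg : ContDiffOn ℝ 1 (homExtR g) {(0 : E3)}ᶜ) :
    ContDiff ℝ 1 fun θ => homExtR g (meridian θ) :=
  contDiff_iff_contDiffAt.2 fun θ => (hg.contDiffAt (isOpen_compl_singleton.mem_nhds
    (ne_zero_of_mem_sphere2 (meridian_mem_sphere2 θ)))).comp θ contDiff_meridian.contDiffAt

lemma continuous_profile (hg : ContDiffOn ℝ 1 (homExtR g) {(0 : E3)}ᶜ) : Continuous (profile g) :=
  (contDiff_homExtR_meridian hg).continuous.comp Real.continuous_arccos

lemma contDiffOn_profile (hg : ContDiffOn ℝ 1 (homExtR g) {(0 : E3)}ᶜ) :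
    ContDiffOn ℝ 1 (profile g) (Ioo (-1) 1) := fun _ hs =>
  ((contDiff_homExtR_meridian hg).contDiffAt.comp _
    (Real.contDiffAt_arccos hs.1.ne' hs.2.ne)).contDiffWithinAt

lemma homExtR_meridian_zero (hN : g northPole = 0) : homExtR g (meridian 0) = 0 := by
  have hpole : meridian 0 = northPole := by simp [meridian, northPole]
  rw [homExtR_of_mem_sphere2 g (meridian_mem_sphere2 0), hpole, hN]

lemma homExtR_meridian_pi (hS : g southPole = 0) : homExtR g (meridian Real.pi) = 0 := by
  have hpole : meridian Real.pi = southPole := by simp [meridian, southPole]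
  rw [homExtR_of_mem_sphere2 g (meridian_mem_sphere2 _), hpole, hS]

lemma profile_eq_zero (hN : g northPole = 0) (hS : g southPole = 0) {s : ℝ}
    (hs : s ∉ Ioo (-1 : ℝ) 1) : profile g s = 0 := by
  rcases le_or_gt s (-1) with h | h
  · rw [profile, Real.arccos_eq_pi.2 h, homExtR_meridian_pi hS]
  · rw [profile, Real.arccos_eq_zero.2 (not_lt.1 fun h1 => hs ⟨h, h1⟩), homExtR_meridian_zero hN]

lemma exists_abs_le_mul_sin {H : ℝ → ℝ} (hH : ContDiff ℝ 1 H) (h0 : H 0 = 0)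
    (hpi : H Real.pi = 0) : ∃ C, ∀ θ ∈ Icc 0 Real.pi, |H θ| ≤ C * Real.sin θ := by
  have hmem0 : (0 : ℝ) ∈ Icc 0 Real.pi := left_mem_Icc.2 Real.pi_pos.le
  have hmempi : Real.pi ∈ Icc 0 Real.pi := right_mem_Icc.2 Real.pi_pos.le
  obtain ⟨L, hL⟩ := hH.contDiffOn.exists_lipschitzOnWith one_ne_zero (convex_Icc 0 Real.pi)
    isCompact_Icc
  have hsin {t : ℝ} (h0 : 0 ≤ t) (ht : t ≤ Real.pi / 2) :
      L * t ≤ L * (Real.pi / 2) * Real.sin t := by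
    have hjordan := mul_le_mul_of_nonneg_left (Real.mul_le_sin h0 ht) (Real.pi_div_two_pos.le)
    rw [← mul_assoc, div_mul_div_cancel₀ two_ne_zero, div_self Real.pi_ne_zero, one_mul] at hjordan
    rw [mul_assoc]
    gcongr
  refine ⟨L * (Real.pi / 2), fun θ hθ => ?_⟩
  rcases le_total θ (Real.pi / 2) with h | h
  · have hlip := hL.dist_le_mul θ hθ 0 hmem0
    rw [h0, Real.dist_eq, Real.dist_eq, sub_zero, sub_zero, abs_of_nonneg hθ.1] at hlip
    exact hlip.trans (hsin hθ.1 h)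
  · have hlip := hL.dist_le_mul θ hθ Real.pi hmempi
    rw [hpi, Real.dist_eq, dist_comm, Real.dist_eq, sub_zero,
      abs_of_nonneg (sub_nonneg.2 hθ.2)] at hlip
    rw [← Real.sin_pi_sub]
    exact hlip.trans (hsin (sub_nonneg.2 hθ.2) (by linarith))

lemma exists_sq_profile_le (hg : ContDiffOn ℝ 1 (homExtR g) {(0 : E3)}ᶜ)
    (hN : g northPole = 0) (hS : g southPole = 0) :
    ∃ C, ∀ s ∈ Icc (-1 : ℝ) 1, profile g s ^ 2 ≤ C * (1 - s ^ 2) := by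
  obtain ⟨C, hC⟩ := exists_abs_le_mul_sin (contDiff_homExtR_meridian hg)
    (homExtR_meridian_zero hN) (homExtR_meridian_pi hS)
  refine ⟨C ^ 2, fun s hs => ?_⟩
  have hs0 : 0 ≤ 1 - s ^ 2 := sub_nonneg.2 ((sq_le_one_iff_abs_le_one s).2 (abs_le.2 hs))
  have hle := hC _ ⟨Real.arccos_nonneg s, Real.arccos_le_pi s⟩
  rw [Real.sin_arccos] at hle
  rw [← sq_abs, ← Real.sq_sqrt hs0, ← mul_pow]
  exact pow_le_pow_left₀ (abs_nonneg _) hle 2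

lemma gradSqR_homExtR_eq (hg : ContDiffOn ℝ 1 (homExtR g) {(0 : E3)}ᶜ)
    (hinv : ∀ α : ℝ, ∀ y ∈ sphere2, g (rot3 α y) = g y) {y : E3} (hy : y ∈ sphere2)
    (hs : y 2 ∈ Ioo (-1 : ℝ) 1) :
    gradSqR (homExtR g) y = (1 - y 2 ^ 2) * deriv (profile g) (y 2) ^ 2 := by
  have hzonal : homExtR g =ᶠ[𝓝 y] homExtR fun x => profile g (x 2) :=
    (eventually_ne_nhds (ne_zero_of_mem_sphere2 hy)).mono fun x hx =>
      eq_profile hinv (mem_sphere_zero_iff_norm.2 (NormedSpace.norm_normalize hx))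
  rw [← gradSqR_homExtR_zonal (mem_sphere_zero_iff_norm.1 hy) (((contDiffOn_profile hg).contDiffAt
    (isOpen_Ioo.mem_nhds hs)).differentiableAt one_ne_zero)]
  unfold gradSqR
  rw [hzonal.fderiv_eq]

end Profile

section UpperDensity

open Set Metric

variable {g : E3 → ℝ}

lemma gradSqR_nonneg (f : E3 → ℝ) (x : E3) : 0 ≤ gradSqR f x :=
  Finset.sum_nonneg fun _ _ => sq_nonneg _

lemma continuousOn_gradSqR {f : E3 → ℝ} {U : Set E3} (hU : IsOpen U) (hf : ContDiffOn ℝ 1 f U) :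
    ContinuousOn (gradSqR f) U := fun _ hx =>
  ContinuousAt.continuousWithinAt <| tendsto_finsetSum _ fun _ _ =>
    (((hf.contDiffAt (hU.mem_nhds hx)).continuousAt_fderiv one_ne_zero).clm_apply
      continuousAt_const).pow 2

/-- The density `¼ g² + |∇ĝ|² + g² / (y₁² + y₂²)` on the sphere. -/
def invariantDensity (g : E3 → ℝ) (y : E3) : ℝ :=
  1 / 4 * g y ^ 2 + gradSqR (homExtR g) y + g y ^ 2 / (y 0 ^ 2 + y 1 ^ 2)

lemma invariantDensity_nonneg (g : E3 → ℝ) (y : E3) : 0 ≤ invariantDensity g y := by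
  have hgrad := gradSqR_nonneg (homExtR g) y
  unfold invariantDensity
  positivity

lemma sq_add_sq_of_mem_sphere2 {y : E3} (hy : y ∈ sphere2) : y 0 ^ 2 + y 1 ^ 2 = 1 - y 2 ^ 2 := by
  rw [← normSq_planar, normSq_planar_eq, mem_sphere_zero_iff_norm.1 hy, one_pow]

lemma zonalDensity_profile_le (hg : ContDiffOn ℝ 1 (homExtR g) {(0 : E3)}ᶜ)
    (hinv : ∀ α : ℝ, ∀ y ∈ sphere2, g (rot3 α y) = g y) (hN : g northPole = 0)
    (hS : g southPole = 0) {y : E3} (hy : y ∈ sphere2) :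
    zonalDensity (profile g) (y 2) ≤ invariantDensity g y := by
  by_cases hs : y 2 ∈ Ioo (-1 : ℝ) 1
  · rw [zonalDensity, invariantDensity, gradSqR_homExtR_eq hg hinv hy hs, eq_profile hinv hy,
      sq_add_sq_of_mem_sphere2 hy, one_div_mul_eq_div]
  · have hpole : 1 - y 2 ^ 2 = 0 := by
      obtain ⟨hlow, hhigh⟩ := height_mem_Icc ⟨y, hy⟩
      rcases hlow.eq_or_lt with h | h
      · rw [← h]; norm_num
      · rw [hhigh.antisymm (not_lt.1 fun h1 => hs ⟨h, h1⟩)]; norm_num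
    have hzero : zonalDensity (profile g) (y 2) = 0 := by
      rw [zonalDensity, profile_eq_zero hN hS hs, hpole]; norm_num
    exact hzero ▸ invariantDensity_nonneg g y

lemma integrable_gradSqR_homExtR (hg : ContDiffOn ℝ 1 (homExtR g) {(0 : E3)}ᶜ) :
    Integrable (fun y : sphere (0 : E3) 1 => gradSqR (homExtR g) y) sphereMeasure := by
  have hcont : Continuous fun y : sphere (0 : E3) 1 => gradSqR (homExtR g) y :=
    (continuousOn_gradSqR isOpen_compl_singleton hg).comp_continuous continuous_subtype_val
      fun y => ne_zero_of_mem_sphere2 y.2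
  exact hcont.integrable_of_hasCompactSupport (HasCompactSupport.of_compactSpace _)

lemma integrable_sq_profile_div (hg : ContDiffOn ℝ 1 (homExtR g) {(0 : E3)}ᶜ)
    (hN : g northPole = 0) (hS : g southPole = 0) :
    Integrable (fun y : sphere (0 : E3) 1 => profile g ((y : E3) 2) ^ 2 / (1 - (y : E3) 2 ^ 2))
      sphereMeasure := by
  obtain ⟨C, hC⟩ := exists_sq_profile_le hg hN hS
  have hC0 : 0 ≤ C := by simpa using (sq_nonneg _).trans (hC 0 (by norm_num))
  have hcont := continuous_profile hg
  refine Integrable.of_bound (C := C) (Measurable.aestronglyMeasurable (by fun_prop))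
    (ae_of_all _ fun y => ?_)
  have hs : 0 ≤ 1 - (y : E3) 2 ^ 2 := by
    rw [← sq_add_sq_of_mem_sphere2 y.2]
    positivity
  rw [Real.norm_of_nonneg (by positivity)]
  exact div_le_of_le_mul₀ hs hC0 (hC _ (height_mem_Icc y))

lemma integrable_invariantDensity (hg : ContDiffOn ℝ 1 (homExtR g) {(0 : E3)}ᶜ)
    (hinv : ∀ α : ℝ, ∀ y ∈ sphere2, g (rot3 α y) = g y) (hN : g northPole = 0)
    (hS : g southPole = 0) :
    Integrable (fun y : sphere (0 : E3) 1 => invariantDensity g y) sphereMeasure := by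
  have hsq := integrable_sq_height (continuous_profile hg)
  refine (((hsq.const_mul (1 / 4)).add (integrable_gradSqR_homExtR hg)).add
    (integrable_sq_profile_div hg hN hS)).congr (ae_of_all _ fun y => ?_)
  simp only [Pi.add_apply, invariantDensity, eq_profile hinv y.2, sq_add_sq_of_mem_sphere2 y.2]

lemma integrable_zonalDensity_profile (hg : ContDiffOn ℝ 1 (homExtR g) {(0 : E3)}ᶜ)
    (hinv : ∀ α : ℝ, ∀ y ∈ sphere2, g (rot3 α y) = g y) (hN : g northPole = 0)
    (hS : g southPole = 0) :
    Integrable (fun y : sphere (0 : E3) 1 => zonalDensity (profile g) ((y : E3) 2))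
      sphereMeasure := by
  have hcont := continuous_profile hg
  have := measurable_deriv (profile g)
  refine (integrable_invariantDensity hg hinv hN hS).mono'
    (Measurable.aestronglyMeasurable (by unfold zonalDensity; fun_prop)) (ae_of_all _ fun y => ?_)
  rw [Real.norm_of_nonneg (zonalDensity_nonneg _ (height_mem_Icc y))]
  exact zonalDensity_profile_le hg hinv hN hS y.2

end UpperDensity

section Stability

open Set Metric

variable {ω : E3 → V5} {g : E3 → ℝ}

lemma vdot_smul_right (p q : V5) (c : ℝ) : vdot p (c • q) = c * vdot p q := by
  simp only [vdot, Prod.smul_fst, Prod.smul_snd, Complex.real_smul, smul_eq_mul, map_mul,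
    Complex.conj_ofReal, mul_left_comm _ (c : ℂ), mul_left_comm _ c, Complex.re_ofReal_mul, mul_add]

lemma vdot_homExt_azimuthal (horth : ∀ y ∈ sphere2, vdot (ω y) (0, Complex.I * planar y, 0) = 0)
    (x : E3) : vdot (homExt ω x) (0, Complex.I * planar x, 0) = 0 := by
  rcases eq_or_ne x 0 with rfl | hx
  · simp [vdot]
  · have hunit := horth (‖x‖⁻¹ • x) (mem_sphere_zero_iff_norm.2 (NormedSpace.norm_normalize hx))
    have hsmul : ((0, Complex.I * planar (‖x‖⁻¹ • x), 0) : V5) =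
        ‖x‖⁻¹ • ((0, Complex.I * planar x, 0) : V5) := by
      simp only [map_smul, mul_smul_comm, Prod.smul_mk, smul_zero]
    rw [hsmul, vdot_smul_right] at hunit
    exact (mul_eq_zero.1 hunit).resolve_left (inv_ne_zero (norm_ne_zero_iff.2 hx))

theorem statement14_general (hω : ∀ x, planar x ≠ 0 → ContDiffAt ℝ 1 (homExt ω) x)
    (horth : ∀ y ∈ sphere2, vdot (ω y) (0, Complex.I * planar y, 0) = 0)
    (hstab : IsStable (homExt ω)) (hg : ContDiffOn ℝ 1 (homExtR g) {(0 : E3)}ᶜ)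
    (hinv : ∀ α : ℝ, ∀ y ∈ sphere2, g (rot3 α y) = g y)
    (hN : g northPole = 0) (hS : g southPole = 0) :
    ∫ y in sphere2, g y ^ 2 * gradSq (homExt ω) y ∂surf ≤
      ∫ y in sphere2,
        (1 / 4 * g y ^ 2 + gradSqR (homExtR g) y + g y ^ 2 / ((y 0) ^ 2 + (y 1) ^ 2)) ∂surf := by
  obtain ⟨c, hc, hsurf⟩ :=
    exists_setIntegral_hausdorffMeasure_sphere zero_le_two surf_sphere2_ne_top
  have hintegrable := integrable_zonalDensity_profile hg hinv hN hS
  have hle := integral_gradSq_mul_sq_le hω (vdot_homExt_azimuthal horth) hstab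
    (continuous_profile hg) (fun _ => profile_eq_zero hN hS) (contDiffOn_profile hg) hintegrable
  calc ∫ y in sphere2, g y ^ 2 * gradSq (homExt ω) y ∂surf
      = c * ∫ y : sphere (0 : E3) 1, g y ^ 2 * gradSq (homExt ω) y ∂sphereMeasure := hsurf _
    _ = c * ∫ y : sphere (0 : E3) 1,
          gradSq (homExt ω) y * profile g ((y : E3) 2) ^ 2 ∂sphereMeasure := by
      simp only [fun y : sphere (0 : E3) 1 => eq_profile hinv y.2, mul_comm]
    _ ≤ c * ∫ y : sphere (0 : E3) 1, invariantDensity g y ∂sphereMeasure :=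
      mul_le_mul_of_nonneg_left (hle.trans (integral_mono hintegrable
        (integrable_invariantDensity hg hinv hN hS)
        fun y => zonalDensity_profile_le hg hinv hN hS y.2)) hc
    _ = ∫ y in sphere2, invariantDensity g y ∂surf := (hsurf _).symm

end Stability

section ExplicitFamily

open Filter Topology

lemma contDiff_normSq {n : WithTop ℕ∞} : ContDiff ℝ n Complex.normSq := by
  simpa only [funext Complex.normSq_eq_norm_sq] using contDiff_norm_sq ℝ

lemma contDiffAt_tau4 {E : Type*} [NormedAddCommGroup E] [NormedSpace ℝ E] {n : WithTop ℕ∞}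
    {w0 w1 w2 w3 : E → ℂ} {x : E} (h0 : ContDiffAt ℝ n w0 x) (h1 : ContDiffAt ℝ n w1 x)
    (h2 : ContDiffAt ℝ n w2 x) (h3 : ContDiffAt ℝ n w3 x) (hx : w0 x ≠ 0) :
    ContDiffAt ℝ n (fun y => tau4 (w0 y) (w1 y) (w2 y) (w3 y)) x := by
  have hN {w : E → ℂ} (hw : ContDiffAt ℝ n w x) :
      ContDiffAt ℝ n (fun y => Complex.normSq (w y)) x := contDiff_normSq.contDiffAt.comp x hw
  have hC {w : E → ℂ} (hw : ContDiffAt ℝ n w x) : ContDiffAt ℝ n (fun y => conj' (w y)) x :=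
    Complex.conjCLE.contDiff.contDiffAt.comp x hw
  have hD := (((hN h0).add (hN h1)).add (hN h2)).add (hN h3)
  have hD0 : Complex.normSq (w0 x) + Complex.normSq (w1 x) + Complex.normSq (w2 x) +
      Complex.normSq (w3 x) ≠ 0 := by
    have hpos := Complex.normSq_pos.2 hx
    have hnonneg (i : E → ℂ) := Complex.normSq_nonneg (i x)
    linarith [hnonneg w1, hnonneg w2, hnonneg w3]
  have hDc := Complex.ofRealCLM.contDiff.contDiffAt.comp x hD
  have hDc0 := Complex.ofReal_ne_zero.2 hD0
  exact ((((hN h0).add (hN h3)).sub (hN h1)).sub (hN h2)).div hD hD0 |>.prodMk <|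
    ((contDiffAt_const.mul (((hC h0).mul h1).add ((hC h2).mul h3))).mul (hDc.inv hDc0)).prodMk
      ((contDiffAt_const.mul (((hC h0).mul h2).sub ((hC h1).mul h3))).mul (hDc.inv hDc0))

lemma contDiffAt_liftCurve {n : WithTop ℕ∞} (μ1 μ2 : ℂ) {p : ℂ × ℂ} (hp : p.1 ≠ 0) :
    ContDiffAt ℝ n (fun q : ℂ × ℂ => liftCurve μ1 μ2 q.1 q.2) p := by
  unfold liftCurve
  exact contDiffAt_tau4 (by fun_prop) (by fun_prop) (by fun_prop) (by fun_prop) (pow_ne_zero 3 hp)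

lemma exists_liftCurve_snd_fst_eq (μ1 μ2 t : ℝ) (z : ℂ) :
    ∃ c : ℝ, (liftCurve μ1 μ2 t z).2.1 = c * z := by
  have hz : (starRingEnd ℂ) z * z = (Complex.normSq z : ℂ) := by rw [mul_comm, Complex.mul_conj]
  simp only [liftCurve, tau4, conj']
  set D : ℝ := Complex.normSq ((t : ℂ) ^ 3) + Complex.normSq (μ1 * (t : ℂ) ^ 2 * z) +
    Complex.normSq (μ2 * t * z ^ 2) + Complex.normSq (-((μ1 : ℂ) * μ2 / 3) * z ^ 3)
  refine ⟨2 * (t ^ 3 * (μ1 * t ^ 2) - μ1 * μ2 ^ 2 / 3 * t * Complex.normSq z ^ 2) / D, ?_⟩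
  push_cast
  rw [← hz]
  simp only [map_mul, map_pow, Complex.conj_ofReal]
  ring

lemma omegaFam_of_ne_southPole (μ1 μ2 : ℂ) {y : E3} (hy : y ≠ southPole) :
    omegaFam μ1 μ2 y = liftCurve μ1 μ2 ((1 + y 2 : ℝ) : ℂ) (planar y) := by
  have hplanar : (y 0 : ℂ) + (y 1 : ℂ) * Complex.I = planar y := by
    rw [← planar_re, ← planar_im, Complex.re_add_im]
  rw [omegaFam, if_neg hy, hplanar]

lemma contDiffAt_omegaFam {n : WithTop ℕ∞} (μ1 μ2 : ℂ) {y : E3} (hy : 1 + y 2 ≠ 0) :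
    ContDiffAt ℝ n (omegaFam μ1 μ2) y := by
  have hsouth : y ≠ southPole := by
    rintro rfl
    simp [southPole] at hy
  have hcoord : ContDiff ℝ n fun x : E3 => (((1 + x 2 : ℝ) : ℂ), planar x) :=
    (Complex.ofRealCLM.contDiff.comp (by fun_prop : ContDiff ℝ n fun x : E3 => 1 + x 2)).prodMk
      planar.contDiff
  exact ((contDiffAt_liftCurve μ1 μ2 (Complex.ofReal_ne_zero.2 hy)).comp y
    hcoord.contDiffAt).congr_of_eventuallyEq
      ((eventually_ne_nhds hsouth).mono fun x hx => omegaFam_of_ne_southPole μ1 μ2 hx)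

lemma contDiffAt_homExt_omegaFam {n : WithTop ℕ∞} (μ1 μ2 : ℂ) {x : E3} (hx : planar x ≠ 0) :
    ContDiffAt ℝ n (homExt (omegaFam μ1 μ2)) x := by
  have hx0 : x ≠ 0 := by
    rintro rfl
    exact hx (map_zero _)
  have hheight := (planar_ne_zero_iff_mem_Ioo (NormedSpace.norm_normalize hx0)).1
    (planar_inv_norm_smul_ne_zero hx)
  exact (contDiffAt_omegaFam μ1 μ2 (neg_lt_iff_pos_add'.1 hheight.1).ne').comp x
    (contDiffAt_inv_norm_smul hx0)

lemma vdot_omegaFam_azimuthal (μ1 μ2 : ℝ) (y : E3) :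
    vdot (omegaFam μ1 μ2 y) (0, Complex.I * planar y, 0) = 0 := by
  by_cases hy : y = southPole
  · have hplanar : planar southPole = 0 := by
      apply Complex.ext <;> simp [planar_re, planar_im, southPole]
    simp [hy, hplanar, vdot]
  · obtain ⟨c, hc⟩ := exists_liftCurve_snd_fst_eq μ1 μ2 (1 + y 2) (planar y)
    have hre (z : ℂ) : (c * z * (starRingEnd ℂ) (Complex.I * z)).re = 0 := by
      rw [map_mul, Complex.conj_I, mul_mul_mul_comm, Complex.mul_conj]
      simp
    rw [omegaFam_of_ne_southPole _ _ hy, vdot, hc, hre]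
    simp

end ExplicitFamily

/-- Stability inequality: if the tangent map of ω_{μ₁,μ₂} (μ₁, μ₂ ≥ 0 real) is stable,
then for every S¹-invariant C¹ function g on S² vanishing at the poles,
∫ g²|∇ŵ|² ≤ ∫ (¼g² + |∇ĝ|² + g²/(y₁² + y₂²)). -/
theorem statement14 (μ1 μ2 : ℝ) (hμ1 : 0 ≤ μ1) (hμ2 : 0 ≤ μ2)
    (hstab : IsStable (homExt (omegaFam (μ1 : ℂ) (μ2 : ℂ))))
    (g : E3 → ℝ)
    (hg : ContDiffOn ℝ 1 (homExtR g) {(0 : E3)}ᶜ)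
    (hinv : ∀ α : ℝ, ∀ y ∈ sphere2, g (rot3 α y) = g y)
    (hN : g northPole = 0) (hS : g southPole = 0) :
    ∫ y in sphere2, g y ^ 2 * gradSq (homExt (omegaFam (μ1 : ℂ) (μ2 : ℂ))) y ∂surf ≤
      ∫ y in sphere2,
        (1 / 4 * g y ^ 2 + gradSqR (homExtR g) y + g y ^ 2 / ((y 0) ^ 2 + (y 1) ^ 2)) ∂surf := by
  exact statement14_general (fun _ => contDiffAt_homExt_omegaFam _ _)
    (fun y _ => vdot_omegaFam_azimuthal μ1 μ2 y) hstab hg hinv hN hS
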